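/- Let α > 0, ε = (ε1,…,εM) ∈ (0,1)^M, and let P = (P1,…,PM) be a tuple of distinct distributions on a finite alphabet X such that for each j ∈ [M] the minimizer i*(j) := argmin_{i∈[M], i≠j} GJS(P_i,P_j,α) is unique and V(P_{i*(j)},P_j,α) > 0. Let J1 := argmin_{j∈[M]} GJS(P_{i*(j)},P_j,α) and J2 := argmin_{j∈J1} sqrt(V(P_{i*(j)},P_j,α))·Φ^{-1}(ε_j). Then for any j ∈ J2, there exist C > 0 and n0 such that for all n ≥ n0, | λ*(n,α,ε|P) − GJS(P_{i*(j)},P_j,α) − sqrt(V(P_{i*(j)},P_j,α)/n)·Φ^{-1}(ε_j) | ≤ C·(log n)/n. -/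

import Mathlib

open Filter Topology MeasureTheory

namespace Classification

variable {X : Type*} [Fintype X] [DecidableEq X]

/-- `P` is a probability mass function on the finite alphabet `X`. -/
def IsDist (P : X → ℝ) : Prop := (∀ x, 0 ≤ P x) ∧ ∑ x, P x = 1

/-- `P` has full support. -/
def FullSupport (P : X → ℝ) : Prop := ∀ x, 0 < P x

/-- Empirical distribution (type) of a sequence `x : Fin m → X`. -/
noncomputable def empDist {m : ℕ} (x : Fin m → X) : X → ℝ :=
  fun a => ((Finset.univ.filter fun i => x i = a).card : ℝ) / m

/-- Real-valued KL divergence with the usual `0 · log 0 = 0` convention. -/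
noncomputable def klDivR (Q P : X → ℝ) : ℝ := ∑ x, Q x * Real.log (Q x / P x)

open Classical in
/-- Extended-real-valued KL divergence: `⊤` when `Q` is not absolutely continuous w.r.t. `P`. -/
noncomputable def klDivE (Q P : X → ℝ) : EReal :=
  if ∀ x, P x = 0 → Q x = 0 then ((klDivR Q P : ℝ) : EReal) else ⊤

/-- The mixture `(α P1 + P2) / (1 + α)`. -/
noncomputable def mix (P1 P2 : X → ℝ) (α : ℝ) : X → ℝ :=
  fun x => (α * P1 x + P2 x) / (1 + α)

/-- Generalized Jensen–Shannon divergence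
`GJS(P1,P2,α) = α D(P1 ‖ (αP1+P2)/(1+α)) + D(P2 ‖ (αP1+P2)/(1+α))`. -/
noncomputable def GJS (P1 P2 : X → ℝ) (α : ℝ) : ℝ :=
  α * klDivR P1 (mix P1 P2 α) + klDivR P2 (mix P1 P2 α)

/-- Training sequence length `N = ⌈α n⌉`. -/
noncomputable def trainLen (α : ℝ) (n : ℕ) : ℕ := ⌈α * (n : ℝ)⌉₊

/-- Probability of observing the sequence `x` under i.i.d. sampling from `P`. -/
noncomputable def seqProb (P : X → ℝ) {m : ℕ} (x : Fin m → X) : ℝ := ∏ i, P (x i)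

/-- A binary classification test: output `true` means "declare H₂",
`false` means "declare H₁". -/
abbrev BTest (X : Type*) (α : ℝ) (n : ℕ) : Type _ :=
  (Fin (trainLen α n) → X) → (Fin (trainLen α n) → X) → (Fin n → X) → Bool

/-- Type-I error probability: probability of declaring `H₂` when `Y^n ~ P1` (hypothesis H₁). -/
noncomputable def beta1 {α : ℝ} {n : ℕ} (φ : BTest X α n) (P1 P2 : X → ℝ) : ℝ :=
  ∑ x1 : Fin (trainLen α n) → X, ∑ x2 : Fin (trainLen α n) → X, ∑ y : Fin n → X,
    if φ x1 x2 y = true then seqProb P1 x1 * seqProb P2 x2 * seqProb P1 y else 0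

/-- Type-II error probability: probability of declaring `H₁` when `Y^n ~ P2` (hypothesis H₂). -/
noncomputable def beta2 {α : ℝ} {n : ℕ} (φ : BTest X α n) (P1 P2 : X → ℝ) : ℝ :=
  ∑ x1 : Fin (trainLen α n) → X, ∑ x2 : Fin (trainLen α n) → X, ∑ y : Fin n → X,
    if φ x1 x2 y = false then seqProb P1 x1 * seqProb P2 x2 * seqProb P2 y else 0

open Classical in
/-- Gutman's test with threshold `lam`: declare `H₁` iff `GJS(T̂_{x₁}, T̂_y, α) ≤ lam`. -/
noncomputable def gutman (α lam : ℝ) (n : ℕ) : BTest X α n :=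
  fun x1 _ y => if GJS (empDist x1) (empDist y) α ≤ lam then false else true

open Classical in
/-- `- log x` as an extended real, with `⊤` at `x = 0`. -/
noncomputable def negLogE (x : ℝ) : EReal :=
  if x = 0 then ⊤ else ((-Real.log x : ℝ) : EReal)

/-- Gutman's exponent function
`F(P1,P2,α,lam) = min { α D(Q1‖P1) + D(Q2‖P2) : GJS(Q1,Q2,α) ≤ lam }` (as an inf in `EReal`). -/
noncomputable def Fexp (P1 P2 : X → ℝ) (α lam : ℝ) : EReal :=
  sInf {v : EReal | ∃ Q1 Q2 : X → ℝ, IsDist Q1 ∧ IsDist Q2 ∧ GJS Q1 Q2 α ≤ lam ∧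
    v = (α : EReal) * klDivE Q1 P1 + klDivE Q2 P2}

/-- Expectation of `f` under `P`. -/
noncomputable def expect (P : X → ℝ) (f : X → ℝ) : ℝ := ∑ x, P x * f x

/-- Variance of `f` under `P`. -/
noncomputable def varD (P : X → ℝ) (f : X → ℝ) : ℝ :=
  expect P (fun x => (f x - expect P f) ^ 2)

/-- Information density `ı₁(x) = log((1+α) P1(x) / (α P1(x) + P2(x)))`. -/
noncomputable def iDens1 (P1 P2 : X → ℝ) (α : ℝ) (x : X) : ℝ :=
  Real.log ((1 + α) * P1 x / (α * P1 x + P2 x))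

/-- Information density `ı₂(x) = log((1+α) P2(x) / (α P1(x) + P2(x)))`. -/
noncomputable def iDens2 (P1 P2 : X → ℝ) (α : ℝ) (x : X) : ℝ :=
  Real.log ((1 + α) * P2 x / (α * P1 x + P2 x))

/-- The dispersion `V(P1,P2,α) = α Var_{P1}[ı₁] + Var_{P2}[ı₂]`. -/
noncomputable def disp (P1 P2 : X → ℝ) (α : ℝ) : ℝ :=
  α * varD P1 (iDens1 P1 P2 α) + varD P2 (iDens2 P1 P2 α)

/-- The standard Gaussian cumulative distribution function `Φ`. -/
noncomputable def stdCDF (x : ℝ) : ℝ :=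
  (Real.sqrt (2 * Real.pi))⁻¹ * ∫ t in Set.Iic x, Real.exp (-t ^ 2 / 2)

/-- The inverse standard Gaussian cdf `Φ⁻¹`. -/
noncomputable def stdCDFInv (p : ℝ) : ℝ := sInf {x : ℝ | p ≤ stdCDF x}

/-- The non-asymptotic fundamental limit `λ*(n, α, ε | P1, P2)` for binary classification. -/
noncomputable def lamStar (α : ℝ) (n : ℕ) (ε : ℝ) (P1 P2 : X → ℝ) : ℝ :=
  sSup {lam : ℝ | 0 ≤ lam ∧ ∃ φ : BTest X α n,
    (∀ Q1 Q2 : X → ℝ, IsDist Q1 → IsDist Q2 →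
      beta1 φ Q1 Q2 ≤ Real.exp (-((n : ℝ) * lam))) ∧
    beta2 φ P1 P2 ≤ ε}

/-- Rényi divergence of order `γ`. -/
noncomputable def renyi (γ : ℝ) (P1 P2 : X → ℝ) : ℝ :=
  (1 / (γ - 1)) * Real.log (∑ x, P1 x ^ γ * P2 x ^ (1 - γ))

/-- The fundamental limit `τ*(n, α, ε | φ_n^Gut, P1, P2)` in the dual setting for Gutman's test. -/
noncomputable def tauStarGut (α : ℝ) (n : ℕ) (ε : ℝ) (P1 P2 : X → ℝ) : ℝ :=
  sSup {τ : ℝ | 0 ≤ τ ∧ ∃ lam : ℝ, 0 ≤ lam ∧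
    (∀ Q1 Q2 : X → ℝ, IsDist Q1 → IsDist Q2 →
      beta1 (gutman α lam n) Q1 Q2 ≤ ε) ∧
    beta2 (gutman α lam n) P1 P2 ≤ Real.exp (-((n : ℝ) * τ))}

/-- A two-sample homogeneity test: `true` means "declare H₂" (different distributions). -/
abbrev TTest (X : Type*) (α : ℝ) (n : ℕ) : Type _ :=
  (Fin (trainLen α n) → X) → (Fin n → X) → Bool

/-- False-alarm probability of a two-sample test. -/
noncomputable def betaFA {α : ℝ} {n : ℕ} (φ : TTest X α n) (P1 : X → ℝ) : ℝ :=
  ∑ x : Fin (trainLen α n) → X, ∑ y : Fin n → X,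
    if φ x y = true then seqProb P1 x * seqProb P1 y else 0

/-- Miss-detection probability of a two-sample test. -/
noncomputable def betaMD {α : ℝ} {n : ℕ} (φ : TTest X α n) (P1 P2 : X → ℝ) : ℝ :=
  ∑ x : Fin (trainLen α n) → X, ∑ y : Fin n → X,
    if φ x y = false then seqProb P1 x * seqProb P2 y else 0

/-- The fundamental limit `ξ*(n, α, ε | P1, P2)` for two-sample homogeneity testing. -/
noncomputable def xiStar (α : ℝ) (n : ℕ) (ε : ℝ) (P1 P2 : X → ℝ) : ℝ :=
  sSup {lam : ℝ | 0 ≤ lam ∧ ∃ φ : TTest X α n,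
    (∀ Q1 : X → ℝ, IsDist Q1 → betaFA φ Q1 ≤ Real.exp (-((n : ℝ) * lam))) ∧
    betaMD φ P1 P2 ≤ ε}

/-- An M-ary classification test with the rejection option: `some j` means "declare H_j",
`none` means "reject". -/
abbrev MTest (X : Type*) (M : ℕ) (α : ℝ) (n : ℕ) : Type _ :=
  (Fin M → Fin (trainLen α n) → X) → (Fin n → X) → Option (Fin M)

/-- Type-`j` error probability: probability of declaring some hypothesis other than
`H_j` or rejection, under `H_j`. -/
noncomputable def betaM {M : ℕ} {α : ℝ} {n : ℕ} (ψ : MTest X M α n)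
    (P : Fin M → X → ℝ) (j : Fin M) : ℝ :=
  ∑ xs : Fin M → Fin (trainLen α n) → X, ∑ y : Fin n → X,
    if ψ xs y ≠ some j ∧ ψ xs y ≠ none then
      (∏ i, seqProb (P i) (xs i)) * seqProb (P j) y else 0

/-- Type-`j` rejection probability: probability of rejecting under `H_j`. -/
noncomputable def zetaM {M : ℕ} {α : ℝ} {n : ℕ} (ψ : MTest X M α n)
    (P : Fin M → X → ℝ) (j : Fin M) : ℝ :=
  ∑ xs : Fin M → Fin (trainLen α n) → X, ∑ y : Fin n → X,
    if ψ xs y = none then (∏ i, seqProb (P i) (xs i)) * seqProb (P j) y else 0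

/-- The fundamental limit `λ*(n, α, ε | P)` for M-ary classification with rejection. -/
noncomputable def lamStarM (M : ℕ) (α : ℝ) (n : ℕ) (ε : Fin M → ℝ)
    (P : Fin M → X → ℝ) : ℝ :=
  sSup {lam : ℝ | 0 ≤ lam ∧ ∃ ψ : MTest X M α n,
    (∀ Q : Fin M → X → ℝ, (∀ i, IsDist (Q i)) → ∀ j,
      betaM ψ Q j ≤ Real.exp (-((n : ℝ) * lam))) ∧
    (∀ j, zetaM ψ P j ≤ ε j)}

open Classical in
/-- Gutman's M-ary test with rejection and threshold `lam`. -/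
noncomputable def gutmanM (M : ℕ) [NeZero M] (α lam : ℝ) (n : ℕ) : MTest X M α n :=
  fun xs y =>
    if ∃ i k : Fin M, i ≠ k ∧ GJS (empDist (xs i)) (empDist y) α ≤ lam ∧
        GJS (empDist (xs k)) (empDist y) α ≤ lam then none
    else if h : ∃ j : Fin M, GJS (empDist (xs j)) (empDist y) α ≤ lam then some h.choose
    else some 0

/-- The fundamental limit `τ*(n, α, ε | Ψ_n^Gut, P)` in the dual setting for
Gutman's M-ary test. -/
noncomputable def tauStarGutM (M : ℕ) [NeZero M] (α : ℝ) (n : ℕ) (ε : ℝ)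
    (P : Fin M → X → ℝ) : ℝ :=
  sSup {τ : ℝ | 0 ≤ τ ∧ ∃ lam : ℝ, 0 ≤ lam ∧
    (∀ Q : Fin M → X → ℝ, (∀ i, IsDist (Q i)) → ∀ j,
      betaM (gutmanM M α lam n) Q j ≤ ε) ∧
    (∀ j, zetaM (gutmanM M α lam n) P j ≤ Real.exp (-((n : ℝ) * τ)))}

/-- Generalized divergence of three distributions
`D_γ(P1,P2,P3) = (γ-1)⁻¹ log Σ_x P1(x)^{1-γ} P2(x)^{γ/2} P3(x)^{γ/2}`. -/
noncomputable def genDiv (γ : ℝ) (P1 P2 P3 : X → ℝ) : ℝ :=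
  (1 / (γ - 1)) * Real.log (∑ x, P1 x ^ (1 - γ) * P2 x ^ (γ / 2) * P3 x ^ (γ / 2))

/-- A binary classification test with the rejection option: `some 0` means "declare H₁",
`some 1` means "declare H₂", `none` means "reject". -/
abbrev RTest (X : Type*) (α : ℝ) (n : ℕ) : Type _ :=
  (Fin (trainLen α n) → X) → (Fin (trainLen α n) → X) → (Fin n → X) → Option (Fin 2)

/-- Type-1 error probability of a rejection test: declare `H₂` under `H₁`. -/
noncomputable def beta1R {α : ℝ} {n : ℕ} (ψ : RTest X α n) (P1 P2 : X → ℝ) : ℝ :=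
  ∑ x1 : Fin (trainLen α n) → X, ∑ x2 : Fin (trainLen α n) → X, ∑ y : Fin n → X,
    if ψ x1 x2 y = some 1 then seqProb P1 x1 * seqProb P2 x2 * seqProb P1 y else 0

/-- Type-2 error probability of a rejection test: declare `H₁` under `H₂`. -/
noncomputable def beta2R {α : ℝ} {n : ℕ} (ψ : RTest X α n) (P1 P2 : X → ℝ) : ℝ :=
  ∑ x1 : Fin (trainLen α n) → X, ∑ x2 : Fin (trainLen α n) → X, ∑ y : Fin n → X,
    if ψ x1 x2 y = some 0 then seqProb P1 x1 * seqProb P2 x2 * seqProb P2 y else 0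

open Classical in
/-- Type-`j` rejection probability of a binary rejection test. -/
noncomputable def zetaR {α : ℝ} {n : ℕ} (ψ : RTest X α n) (P1 P2 : X → ℝ) (j : Fin 2) : ℝ :=
  ∑ x1 : Fin (trainLen α n) → X, ∑ x2 : Fin (trainLen α n) → X, ∑ y : Fin n → X,
    if ψ x1 x2 y = none then
      seqProb P1 x1 * seqProb P2 x2 * seqProb (if j = 0 then P1 else P2) y else 0

/-- A binary test is type-based if it depends on the data only through the
triple of empirical distributions. -/
def TypeBasedB {α : ℝ} {n : ℕ} (φ : BTest X α n) : Prop :=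
  ∀ x1 x1' x2 x2' : Fin (trainLen α n) → X, ∀ y y' : Fin n → X,
    empDist x1 = empDist x1' → empDist x2 = empDist x2' → empDist y = empDist y' →
      φ x1 x2 y = φ x1' x2' y'

/-- An M-ary test is type-based if it depends on the data only through the
tuple of empirical distributions. -/
def TypeBasedM {M : ℕ} {α : ℝ} {n : ℕ} (ψ : MTest X M α n) : Prop :=
  ∀ xs xs' : Fin M → Fin (trainLen α n) → X, ∀ y y' : Fin n → X,
    (∀ i, empDist (xs i) = empDist (xs' i)) → empDist y = empDist y' →
      ψ xs y = ψ xs' y'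

open Classical in
/-- Probability of an event under hypothesis `H₂` in the binary setup. -/
noncomputable def prH2E (α : ℝ) (n : ℕ) (P1 P2 : X → ℝ)
    (E : (Fin (trainLen α n) → X) → (Fin (trainLen α n) → X) → (Fin n → X) → Prop) : ℝ :=
  ∑ x1 : Fin (trainLen α n) → X, ∑ x2 : Fin (trainLen α n) → X, ∑ y : Fin n → X,
    if E x1 x2 y then seqProb P1 x1 * seqProb P2 x2 * seqProb P2 y else 0

open Classical in
/-- Probability of an event under hypothesis `H_j` in the M-ary setup. -/
noncomputable def prHjM (M : ℕ) (α : ℝ) (n : ℕ) (P : Fin M → X → ℝ) (j : Fin M)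
    (E : (Fin M → Fin (trainLen α n) → X) → (Fin n → X) → Prop) : ℝ :=
  ∑ xs : Fin M → Fin (trainLen α n) → X, ∑ y : Fin n → X,
    if E xs y then (∏ i, seqProb (P i) (xs i)) * seqProb (P j) y else 0

/-- `η_n(α) = |X| log(n+1)/n + 2|X| log(1+αn)/(αn)`. -/
noncomputable def etaN (X : Type*) [Fintype X] (α : ℝ) (n : ℕ) : ℝ :=
  (Fintype.card X : ℝ) * Real.log ((n : ℝ) + 1) / n +
    2 * (Fintype.card X : ℝ) * Real.log (1 + α * n) / (α * n)

/-- `η_{n,M} = M |X| log(nα+1)/(nα) + |X| log(n+1)/n`. -/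
noncomputable def etaNM (X : Type*) [Fintype X] (M : ℕ) (α : ℝ) (n : ℕ) : ℝ :=
  (M : ℝ) * (Fintype.card X : ℝ) * Real.log ((n : ℝ) * α + 1) / ((n : ℝ) * α) +
    (Fintype.card X : ℝ) * Real.log ((n : ℝ) + 1) / n

/-- `Q` is an `m`-type: the empirical distribution of some sequence of length `m`. -/
def IsTypeDist (m : ℕ) (Q : X → ℝ) : Prop := ∃ x : Fin m → X, empDist x = Q

/-- The type-restricted exponent function `F_n`. -/
noncomputable def Fn (n : ℕ) (P1 P2 : X → ℝ) (α lam : ℝ) : ℝ :=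
  sInf {v : ℝ | ∃ Q1 Q2 : X → ℝ, IsTypeDist (trainLen α n) Q1 ∧ IsTypeDist n Q2 ∧
    GJS Q1 Q2 α ≤ lam ∧ v = α * klDivR Q1 P1 + klDivR Q2 P2}

/-- The second smallest value of a finite family of reals:
`min_{i ≠ j} max (v i) (v j)`. -/
noncomputable def secondMin {M : ℕ} (v : Fin M → ℝ) : ℝ :=
  sInf {t : ℝ | ∃ i j : Fin M, i ≠ j ∧ t = max (v i) (v j)}

/-- The tilted distribution `P^{(γ)}` with `γ = α/(1+α)`. -/
noncomputable def tilt (α : ℝ) (P1 P2 : X → ℝ) : X → ℝ :=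
  fun x => P1 x ^ (α / (1 + α)) * P2 x ^ (1 / (1 + α)) /
    ∑ a, P1 a ^ (α / (1 + α)) * P2 a ^ (1 / (1 + α))

/-! Both bounds come down to the sum `S` of the information densities of `P i` and `P j`,
`i = i*(j)`, along the `i`-th training sequence and the test sequence. Under `H_j` it has mean
`n * GJS (P i) (P j) α + O(1)` and variance `n * disp (P i) (P j) α + O(1)`, so Berry–Esseen
(by Stein's method) gives its quantiles up to `O(1)`.

*Converse.* Replace `P i` by the mixture of `P i` and `P j`. Then `exp S` bounds the likelihood
ratio of `H_j` under `P` to `H_i` under the new tuple, so a test accepting `H_j` with probability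
well above `Pr{S > nλ}` under the former wrongly accepts it with probability above `exp (-nλ)`, up
to polynomial factors, under the latter; the universal error bound forbids this.

*Achievability.* Gutman's test compares the divergence `GJS` of the empirical distributions of the
`i`-th training sequence and of the test sequence with a threshold; by the method of types, its
error probabilities are universally exponentially small. Since `GJS` is jointly convex and `S / n`
is, up to `O(1 / n)`, the value at the empirical pair of its tangent plane at `(P i, P j)`, the
empirical divergence is at least `S / n - O(1 / n)`, and the test rejects only if `S` is below a
quantile. -/

/-! ### The standard Gaussian law -/

/-- The standard Gaussian density, the derivative of `stdCDF`. -/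
noncomputable def stdPDF : ℝ → ℝ := ProbabilityTheory.gaussianPDFReal 0 1

lemma stdPDF_eq (x : ℝ) : stdPDF x = (√(2 * Real.pi))⁻¹ * Real.exp (-x ^ 2 / 2) := by
  simp [stdPDF, ProbabilityTheory.gaussianPDFReal]

lemma stdPDF_pos (x : ℝ) : 0 < stdPDF x :=
  ProbabilityTheory.gaussianPDFReal_pos 0 1 x one_ne_zero

lemma stdPDF_le_one (x : ℝ) : stdPDF x ≤ 1 := by
  have hsqrt : (√(2 * Real.pi))⁻¹ ≤ 1 := by
    refine inv_le_one_of_one_le₀ (Real.one_le_sqrt.2 ?_)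
    linarith [Real.pi_gt_three]
  rw [stdPDF_eq]
  exact mul_le_one₀ hsqrt (Real.exp_pos _).le (Real.exp_le_one_iff.2 (by linarith [sq_nonneg x]))

lemma stdPDF_neg (x : ℝ) : stdPDF (-x) = stdPDF x := by
  simp only [stdPDF_eq, neg_sq]

lemma stdPDF_anti_abs {x y : ℝ} (h : |x| ≤ |y|) : stdPDF y ≤ stdPDF x := by
  have hsq := sq_le_sq.2 h
  simp only [stdPDF_eq]
  gcongr

lemma hasDerivAt_stdPDF (x : ℝ) : HasDerivAt stdPDF (-x * stdPDF x) x := by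
  have hquad : HasDerivAt (fun t : ℝ => -t ^ 2 / 2) (-x) x :=
    (((hasDerivAt_id x).pow 2).neg.div_const 2).congr_deriv (by simp; ring)
  have h := hquad.exp.const_mul (√(2 * Real.pi))⁻¹
  rw [funext stdPDF_eq]
  exact h.congr_deriv (by ring)

lemma continuous_stdPDF : Continuous stdPDF :=
  continuous_iff_continuousAt.2 fun x => (hasDerivAt_stdPDF x).continuousAt

lemma integrable_stdPDF : Integrable stdPDF :=
  ProbabilityTheory.integrable_gaussianPDFReal 0 1

lemma integrable_mul_stdPDF : Integrable fun t => -t * stdPDF t := by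
  have h := (integrable_mul_exp_neg_mul_sq (b := 1 / 2) (by norm_num)).const_mul
    (-(√(2 * Real.pi))⁻¹)
  refine h.congr (ae_of_all _ fun t => ?_)
  simp only [stdPDF_eq]
  rw [show -(1 / 2) * t ^ 2 = -t ^ 2 / 2 by ring]
  ring

lemma tendsto_stdPDF_atBot : Tendsto stdPDF atBot (𝓝 0) := by
  have hsq : Tendsto (fun t : ℝ => -t ^ 2 / 2) atTop atBot :=
    (tendsto_neg_atTop_atBot.comp (tendsto_pow_atTop two_ne_zero)).atBot_div_const two_pos
  have htop := (Real.tendsto_exp_atBot.comp hsq).const_mul (√(2 * Real.pi))⁻¹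
  rw [mul_zero] at htop
  refine (htop.comp tendsto_neg_atBot_atTop).congr fun t => ?_
  simp only [Function.comp_apply, stdPDF_eq, neg_sq]

lemma stdCDF_eq_setIntegral (x : ℝ) : stdCDF x = ∫ t in Set.Iic x, stdPDF t := by
  simp only [stdCDF, stdPDF_eq, integral_const_mul]

lemma stdCDF_eq_cdf (x : ℝ) :
    stdCDF x = ProbabilityTheory.cdf (ProbabilityTheory.gaussianReal 0 1) x := by
  rw [ProbabilityTheory.cdf_eq_real, Measure.real,
    ProbabilityTheory.gaussianReal_apply_eq_integral 0 one_ne_zero, ENNReal.toReal_ofReal,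
    stdCDF_eq_setIntegral, stdPDF]
  exact setIntegral_nonneg measurableSet_Iic fun t _ => (stdPDF_pos t).le

lemma stdCDF_nonneg (x : ℝ) : 0 ≤ stdCDF x :=
  stdCDF_eq_cdf x ▸ ProbabilityTheory.cdf_nonneg _ x

lemma stdCDF_le_one (x : ℝ) : stdCDF x ≤ 1 :=
  stdCDF_eq_cdf x ▸ ProbabilityTheory.cdf_le_one _ x

lemma hasDerivAt_stdCDF (x : ℝ) : HasDerivAt stdCDF (stdPDF x) x := by
  have hsplit : stdCDF = fun y => stdCDF 0 + ∫ t in (0 : ℝ)..y, stdPDF t := funext fun y => by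
    have h := intervalIntegral.integral_Iic_sub_Iic (a := 0) (b := y)
      integrable_stdPDF.integrableOn integrable_stdPDF.integrableOn
    rw [stdCDF_eq_setIntegral, stdCDF_eq_setIntegral]
    linarith
  rw [hsplit]
  exact (continuous_stdPDF.integral_hasStrictDerivAt 0 x).hasDerivAt.const_add _

lemma continuous_stdCDF : Continuous stdCDF :=
  continuous_iff_continuousAt.2 fun x => (hasDerivAt_stdCDF x).continuousAt

lemma strictMono_stdCDF : StrictMono stdCDF :=
  strictMono_of_deriv_pos fun x => (hasDerivAt_stdCDF x).deriv ▸ stdPDF_pos x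

lemma stdCDF_neg (x : ℝ) : stdCDF (-x) = 1 - stdCDF x := by
  have hneg : stdCDF (-x) = ∫ t in Set.Ioi x, stdPDF t := by
    rw [stdCDF_eq_setIntegral, ← integral_comp_neg_Ioi]
    simp only [stdPDF_neg]
  have htotal : ∫ t, stdPDF t = 1 :=
    ProbabilityTheory.integral_gaussianPDFReal_eq_one 0 one_ne_zero
  have hadd := intervalIntegral.integral_Iic_add_Ioi (b := x)
    integrable_stdPDF.integrableOn integrable_stdPDF.integrableOn
  rw [htotal, ← stdCDF_eq_setIntegral, ← hneg] at hadd
  linarith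

lemma stdCDF_sub_le {x y : ℝ} (h : x ≤ y) : stdCDF y - stdCDF x ≤ y - x := by
  have hmvt := convex_univ.image_sub_le_mul_sub_of_deriv_le continuous_stdCDF.continuousOn
    (fun t _ => (hasDerivAt_stdCDF t).differentiableAt.differentiableWithinAt)
    (fun t _ => (hasDerivAt_stdCDF t).deriv ▸ stdPDF_le_one t) x trivial y trivial h
  linarith

lemma exists_mul_sub_le_stdCDF_sub (b : ℝ) :
    ∃ c > 0, ∀ x y, b - 1 ≤ x → x ≤ y → y ≤ b + 1 → c * (y - x) ≤ stdCDF y - stdCDF x := by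
  refine ⟨stdPDF (|b| + 1), stdPDF_pos _, fun x y hx hxy hy => ?_⟩
  refine (convex_Icc (b - 1) (b + 1)).mul_sub_le_image_sub_of_le_deriv
    continuous_stdCDF.continuousOn
    (fun t _ => (hasDerivAt_stdCDF t).differentiableAt.differentiableWithinAt)
    (fun t ht => ?_) x ⟨hx, by linarith⟩ y ⟨by linarith, hy⟩ hxy
  rw [(hasDerivAt_stdCDF t).deriv]
  rw [interior_Icc] at ht
  refine stdPDF_anti_abs ((abs_le.2 ⟨?_, ?_⟩).trans (le_abs_self _))
  · linarith [neg_abs_le b, ht.1]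
  · linarith [le_abs_self b, ht.2]

lemma neg_mul_stdCDF_le_stdPDF (x : ℝ) : -x * stdCDF x ≤ stdPDF x := by
  have hftc := integral_Iic_of_hasDerivAt_of_tendsto' (a := x)
    (fun t _ => hasDerivAt_stdPDF t) integrable_mul_stdPDF.integrableOn tendsto_stdPDF_atBot
  rw [sub_zero] at hftc
  rw [← hftc, stdCDF_eq_setIntegral, ← integral_const_mul]
  refine setIntegral_mono_on (integrable_stdPDF.const_mul _).integrableOn
    integrable_mul_stdPDF.integrableOn measurableSet_Iic fun t ht => ?_
  exact mul_le_mul_of_nonneg_right (neg_le_neg (Set.mem_Iic.1 ht)) (stdPDF_pos t).le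

lemma stdCDF_stdCDFInv {p : ℝ} (hp : p ∈ Set.Ioo (0 : ℝ) 1) : stdCDF (stdCDFInv p) = p := by
  have hbot : Tendsto stdCDF atBot (𝓝 0) :=
    funext stdCDF_eq_cdf ▸ ProbabilityTheory.tendsto_cdf_atBot _
  have htop : Tendsto stdCDF atTop (𝓝 1) :=
    funext stdCDF_eq_cdf ▸ ProbabilityTheory.tendsto_cdf_atTop _
  obtain ⟨x, rfl⟩ : p ∈ Set.range stdCDF :=
    mem_range_of_exists_le_of_exists_ge continuous_stdCDF
      ((hbot.eventually (ge_mem_nhds hp.1)).exists) ((htop.eventually (le_mem_nhds hp.2)).exists)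
  have hset : {y : ℝ | stdCDF x ≤ stdCDF y} = Set.Ici x := by
    ext y; exact strictMono_stdCDF.le_iff_le
  rw [stdCDFInv, hset, csInf_Ici]

/-! ### Stein's equation -/

/-- The Mills ratio `Φ / φ` of the standard Gaussian law at its lower tail. -/
noncomputable def millsRatio (w : ℝ) : ℝ := stdCDF w / stdPDF w

lemma millsRatio_nonneg (w : ℝ) : 0 ≤ millsRatio w := div_nonneg (stdCDF_nonneg w) (stdPDF_pos w).le

lemma neg_mul_millsRatio_le_one (w : ℝ) : -w * millsRatio w ≤ 1 := by
  rw [millsRatio, ← mul_div_assoc, div_le_one (stdPDF_pos w)]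
  exact neg_mul_stdCDF_le_stdPDF w

lemma hasDerivAt_millsRatio (w : ℝ) : HasDerivAt millsRatio (w * millsRatio w + 1) w := by
  refine ((hasDerivAt_stdCDF w).div (hasDerivAt_stdPDF w) (stdPDF_pos w).ne').congr_deriv ?_
  rw [millsRatio]
  field_simp [(stdPDF_pos w).ne']
  ring

lemma continuous_millsRatio : Continuous millsRatio :=
  continuous_iff_continuousAt.2 fun w => (hasDerivAt_millsRatio w).continuousAt

lemma monotone_millsRatio : Monotone millsRatio :=
  monotone_of_deriv_nonneg (fun w => (hasDerivAt_millsRatio w).differentiableAt) fun w => by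
    rw [(hasDerivAt_millsRatio w).deriv]
    linarith [neg_mul_millsRatio_le_one w]

lemma millsRatio_le_three {w : ℝ} (hw : w ≤ 0) : millsRatio w ≤ 3 := by
  refine (monotone_millsRatio hw).trans ?_
  rw [millsRatio, div_le_iff₀ (stdPDF_pos 0), stdPDF_eq]
  have hsqrt : √(2 * Real.pi) ≤ 3 := (Real.sqrt_le_left (by norm_num)).2 (by
    linarith [Real.pi_lt_d2])
  have hinv : 3⁻¹ ≤ (√(2 * Real.pi))⁻¹ := inv_anti₀ (by positivity) hsqrt
  simp only [zero_pow two_ne_zero, neg_zero, zero_div, Real.exp_zero, mul_one]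
  linarith [stdCDF_le_one 0]

lemma millsRatio_mul_stdCDF_neg (w : ℝ) :
    millsRatio w * (1 - stdCDF w) = millsRatio (-w) * stdCDF w := by
  rw [millsRatio, millsRatio, stdPDF_neg, stdCDF_neg]
  ring

lemma millsRatio_mul_le {w p : ℝ} (hp : p ≤ 1 - stdCDF w) :
    millsRatio w * p ≤ millsRatio (-|w|) := by
  rcases le_total 0 w with hw | hw
  · calc millsRatio w * p ≤ millsRatio w * (1 - stdCDF w) :=
          mul_le_mul_of_nonneg_left hp (millsRatio_nonneg w)
      _ = millsRatio (-w) * stdCDF w := millsRatio_mul_stdCDF_neg w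
      _ ≤ millsRatio (-w) := mul_le_of_le_one_right (millsRatio_nonneg _) (stdCDF_le_one w)
      _ = millsRatio (-|w|) := by rw [abs_of_nonneg hw]
  · rw [abs_of_nonpos hw, neg_neg]
    exact mul_le_of_le_one_right (millsRatio_nonneg w) (hp.trans (by linarith [stdCDF_nonneg w]))

/-- The bounded solution `f` of Stein's equation `f' w = w * f w + 1{w < z} - Φ z`. -/
noncomputable def steinSol (z w : ℝ) : ℝ :=
  if z ≤ w then millsRatio (-w) * stdCDF z else millsRatio w * (1 - stdCDF z)

lemma continuous_steinSol (z : ℝ) : Continuous (steinSol z) := by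
  refine Continuous.if_le ((continuous_millsRatio.comp continuous_neg).mul continuous_const)
    (continuous_millsRatio.mul continuous_const) continuous_const continuous_id ?_
  rintro w rfl
  exact (millsRatio_mul_stdCDF_neg _).symm

lemma steinSol_nonneg (z w : ℝ) : 0 ≤ steinSol z w := by
  rw [steinSol]
  split_ifs
  · exact mul_nonneg (millsRatio_nonneg _) (stdCDF_nonneg z)
  · exact mul_nonneg (millsRatio_nonneg _) (sub_nonneg.2 (stdCDF_le_one z))

lemma steinSol_le_millsRatio (z w : ℝ) : steinSol z w ≤ millsRatio (-|w|) := by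
  rw [steinSol]
  split_ifs with h
  · rw [← abs_neg]
    refine millsRatio_mul_le ?_
    rw [stdCDF_neg, sub_sub_cancel]
    exact strictMono_stdCDF.monotone h
  · refine millsRatio_mul_le ?_
    linarith [strictMono_stdCDF.monotone (not_le.1 h).le]

lemma steinSol_le_three (z w : ℝ) : steinSol z w ≤ 3 :=
  (steinSol_le_millsRatio z w).trans (millsRatio_le_three (neg_nonpos.2 (abs_nonneg w)))

lemma abs_mul_steinSol_le_one (z w : ℝ) : |w * steinSol z w| ≤ 1 := by
  rw [abs_mul, abs_of_nonneg (steinSol_nonneg z w)]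
  refine (mul_le_mul_of_nonneg_left (steinSol_le_millsRatio z w) (abs_nonneg w)).trans ?_
  simpa only [neg_neg] using neg_mul_millsRatio_le_one (-|w|)

/-- The right derivative of `steinSol z` (the case `t = 0`), lowered so that its value at `w`
bounds the right derivative from below on the whole interval `[w - t, w + t]`. -/
noncomputable def steinMinorant (z t w : ℝ) : ℝ :=
  w * steinSol z w - (2 * |w| + 5) * t + (if w < z - t then 1 else 0) - stdCDF z

lemma hasDerivWithinAt_steinSol (z w : ℝ) :
    HasDerivWithinAt (steinSol z) (steinMinorant z 0 w) (Set.Ici w) w := by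
  rw [steinMinorant, mul_zero, sub_zero, sub_zero]
  by_cases h : z ≤ w
  · have hsol : ∀ t ∈ Set.Ici w, steinSol z t = millsRatio (-t) * stdCDF z :=
      fun t ht => if_pos (h.trans ht)
    have hderiv := ((hasDerivAt_millsRatio (-w)).comp w (hasDerivAt_neg w)).mul_const (stdCDF z)
    refine (hderiv.hasDerivWithinAt.congr hsol (hsol w Set.self_mem_Ici)).congr_deriv ?_
    rw [hsol w Set.self_mem_Ici, if_neg (not_lt.2 h)]
    ring
  · have hsol : steinSol z =ᶠ[𝓝 w] fun t => millsRatio t * (1 - stdCDF z) := by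
      filter_upwards [gt_mem_nhds (not_le.1 h)] with t ht
      exact if_neg (not_le.2 ht)
    have hderiv := (hasDerivAt_millsRatio w).mul_const (1 - stdCDF z)
    refine ((hderiv.congr_of_eventuallyEq hsol).congr_deriv ?_).hasDerivWithinAt
    rw [hsol.self_of_nhds, if_pos (not_le.1 h)]
    ring

lemma mul_sub_le_image_sub_of_le_rightDeriv {f f' : ℝ → ℝ} {a b c : ℝ}
    (hf : ContinuousOn f (Set.Icc a b))
    (hf' : ∀ x ∈ Set.Ico a b, HasDerivWithinAt f (f' x) (Set.Ici x) x)
    (hc : ∀ x ∈ Set.Ico a b, c ≤ f' x) (hab : a ≤ b) : c * (b - a) ≤ f b - f a := by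
  have hline : ∀ x, HasDerivAt (fun y => -f a - c * (y - a)) (-c) x := fun x =>
    ((((hasDerivAt_id x).sub_const a).const_mul c).const_sub (-f a)).congr_deriv (by ring)
  have h := image_le_of_deriv_right_le_deriv_boundary (f := fun x => -f x) hf.neg
    (fun x hx => (hf' x hx).neg) (B := fun y => -f a - c * (y - a)) (by simp)
    (fun x _ => (hline x).continuousAt.continuousWithinAt)
    (fun x _ => (hline x).hasDerivWithinAt) (fun x hx => neg_le_neg (hc x hx)) ⟨hab, le_rfl⟩
  linarith

lemma abs_steinMinorant_zero_le_two (z w : ℝ) : |steinMinorant z 0 w| ≤ 2 := by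
  have hw := abs_le.1 (abs_mul_steinSol_le_one z w)
  have h0 := stdCDF_nonneg z
  have h1 := stdCDF_le_one z
  rw [steinMinorant, abs_le]
  split_ifs <;> constructor <;> linarith

lemma abs_steinSol_sub_le (z v w : ℝ) : |steinSol z v - steinSol z w| ≤ 2 * |v - w| := by
  wlog h : w ≤ v generalizing v w
  · rw [abs_sub_comm, abs_sub_comm v]
    exact this w v (le_of_not_ge h)
  have hc := continuous_steinSol z
  have hlow := mul_sub_le_image_sub_of_le_rightDeriv (c := -2) hc.continuousOn
    (fun x _ => hasDerivWithinAt_steinSol z x)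
    (fun x _ => (abs_le.1 (abs_steinMinorant_zero_le_two z x)).1) h
  have hup := mul_sub_le_image_sub_of_le_rightDeriv (c := -2) hc.neg.continuousOn
    (fun x _ => (hasDerivWithinAt_steinSol z x).neg)
    (fun x _ => neg_le_neg (abs_le.1 (abs_steinMinorant_zero_le_two z x)).2) h
  rw [Pi.neg_apply, Pi.neg_apply] at hup
  rw [abs_of_nonneg (sub_nonneg.2 h), abs_le]
  constructor <;> linarith

lemma abs_mul_steinSol_sub_le (z v w : ℝ) :
    |v * steinSol z v - w * steinSol z w| ≤ (2 * |w| + 3) * |v - w| := by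
  have hsplit : v * steinSol z v - w * steinSol z w =
      w * (steinSol z v - steinSol z w) + (v - w) * steinSol z v := by ring
  rw [hsplit]
  refine (abs_add_le _ _).trans ?_
  rw [abs_mul, abs_mul, abs_of_nonneg (steinSol_nonneg z v)]
  have h1 := mul_le_mul_of_nonneg_left (abs_steinSol_sub_le z v w) (abs_nonneg w)
  have h2 := mul_le_mul_of_nonneg_left (steinSol_le_three z v) (abs_nonneg (v - w))
  linarith

lemma steinMinorant_add_le {z t δ v w : ℝ} (ht0 : 0 ≤ t) (ht1 : t ≤ 1) (hvw : |v - w| ≤ δ) :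
    steinMinorant z (t + δ) w ≤ steinMinorant z t v := by
  have hlip := (abs_le.1 (abs_mul_steinSol_sub_le z v w)).1
  have hδ : (2 * |w| + 3) * |v - w| ≤ (2 * |w| + 3) * δ :=
    mul_le_mul_of_nonneg_left hvw (by positivity)
  have habs : (|v| - |w|) * t ≤ δ := by
    have h := (abs_sub_abs_le_abs_sub v w).trans hvw
    exact (mul_le_mul_of_nonneg_right h ht0).trans
      (mul_le_of_le_one_right ((abs_nonneg _).trans hvw) ht1)
  have hind : (if w < z - (t + δ) then (1 : ℝ) else 0) ≤ if v < z - t then 1 else 0 := by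
    split_ifs with hw hv <;> try norm_num
    exact hv (by linarith [(abs_le.1 hvw).2])
  rw [steinMinorant, steinMinorant]
  linarith

lemma sq_mul_steinMinorant_le {z w ξ δ : ℝ} (hξ : |ξ| ≤ δ) :
    ξ ^ 2 * steinMinorant z δ w ≤ ξ * (steinSol z (w + ξ) - steinSol z w) := by
  have hmin : ∀ v, |v - w| ≤ δ → steinMinorant z δ w ≤ steinMinorant z 0 v := fun v hv => by
    simpa only [zero_add] using steinMinorant_add_le le_rfl zero_le_one hv
  have hmvt : ∀ a b, a ≤ b → w - δ ≤ a → b ≤ w + δ →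
      steinMinorant z δ w * (b - a) ≤ steinSol z b - steinSol z a := fun a b hab ha hb =>
    mul_sub_le_image_sub_of_le_rightDeriv (continuous_steinSol z).continuousOn
      (fun x _ => hasDerivWithinAt_steinSol z x)
      (fun x hx => hmin x (abs_le.2 ⟨by linarith [hx.1], by linarith [hx.2]⟩)) hab
  obtain ⟨hlo, hhi⟩ := abs_le.1 hξ
  rcases le_total 0 ξ with h | h
  · have hstep := hmvt w (w + ξ) (by linarith) (by linarith) (by linarith)
    nlinarith
  · have hstep := hmvt (w + ξ) w (by linarith) (by linarith) (by linarith)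
    nlinarith

/-! ### Probability on a finite space -/

section FiniteProbability

variable {Ω : Type*} [Fintype Ω] {Q : Ω → ℝ}

lemma expect_add (Q f g : Ω → ℝ) :
    expect Q (fun ω => f ω + g ω) = expect Q f + expect Q g := by
  simp only [expect, mul_add, Finset.sum_add_distrib]

lemma expect_const_mul (Q : Ω → ℝ) (c : ℝ) (f : Ω → ℝ) :
    expect Q (fun ω => c * f ω) = c * expect Q f := by
  simp only [expect, Finset.mul_sum, mul_left_comm]

lemma expect_finsetSum {κ : Type*} (Q : Ω → ℝ) (s : Finset κ) (f : κ → Ω → ℝ) :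
    expect Q (fun ω => ∑ k ∈ s, f k ω) = ∑ k ∈ s, expect Q (f k) := by
  simp only [expect, Finset.mul_sum]
  exact Finset.sum_comm

lemma expect_const (hQ : IsDist Q) (c : ℝ) : expect Q (fun _ => c) = c := by
  rw [expect, ← Finset.sum_mul, hQ.2, one_mul]

lemma expect_mono (hQ : IsDist Q) {f g : Ω → ℝ} (h : ∀ ω, 0 < Q ω → f ω ≤ g ω) :
    expect Q f ≤ expect Q g := by
  refine Finset.sum_le_sum fun ω _ => ?_
  rcases (hQ.1 ω).eq_or_lt with h0 | hpos
  · rw [← h0, zero_mul, zero_mul]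
  · exact mul_le_mul_of_nonneg_left (h ω hpos) hpos.le

lemma abs_expect_le (hQ : IsDist Q) {f : Ω → ℝ} {B : ℝ} (h : ∀ ω, |f ω| ≤ B) :
    |expect Q f| ≤ B := by
  refine abs_le.2 ⟨?_, ?_⟩
  · simpa only [expect_const hQ] using
      expect_mono hQ (f := fun _ => -B) fun ω _ => (abs_le.1 (h ω)).1
  · simpa only [expect_const hQ] using
      expect_mono hQ (g := fun _ => B) fun ω _ => (abs_le.1 (h ω)).2

lemma varD_nonneg (hQ : IsDist Q) (f : Ω → ℝ) : 0 ≤ varD Q f := by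
  rw [varD, ← expect_const hQ 0]
  exact expect_mono hQ fun ω _ => sq_nonneg _

open Classical in
/-- The probability of the event `E` under the probability mass function `Q`. -/
noncomputable def prob (Q : Ω → ℝ) (E : Ω → Prop) : ℝ :=
  expect Q fun ω => if E ω then 1 else 0

lemma prob_mono (hQ : IsDist Q) {E F : Ω → Prop} (h : ∀ ω, 0 < Q ω → E ω → F ω) :
    prob Q E ≤ prob Q F := by
  refine expect_mono hQ fun ω hω => ?_
  split_ifs with hE hF <;> first | exact absurd (h ω hω hE) hF | norm_num

lemma prob_nonneg (hQ : IsDist Q) (E : Ω → Prop) : 0 ≤ prob Q E := by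
  rw [← expect_const hQ 0]
  exact expect_mono hQ fun ω _ => by split_ifs <;> norm_num

lemma prob_le_sum (hQ : ∀ ω, 0 ≤ Q ω) (E : Ω → Prop) : prob Q E ≤ ∑ ω, Q ω := by
  refine Finset.sum_le_sum fun ω _ => mul_le_of_le_one_right (hQ ω) ?_
  dsimp only
  split_ifs <;> norm_num

lemma prob_not (hQ : IsDist Q) (E : Ω → Prop) : prob Q (fun ω => ¬E ω) = 1 - prob Q E := by
  rw [eq_sub_iff_add_eq, prob, prob, ← expect_add]
  refine (congrArg (expect Q) (funext fun ω => ?_)).trans (expect_const hQ 1)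
  by_cases h : E ω <;> simp [h]

lemma prob_le_one (hQ : IsDist Q) (E : Ω → Prop) : prob Q E ≤ 1 := by
  linarith [prob_not hQ E, prob_nonneg hQ fun ω => ¬E ω]

lemma prob_exists_mem_le {κ : Type*} (hQ : IsDist Q) (s : Finset κ) (E : κ → Ω → Prop) :
    prob Q (fun ω => ∃ k ∈ s, E k ω) ≤ ∑ k ∈ s, prob Q (E k) := by
  classical
  simp only [prob]
  rw [← expect_finsetSum]
  refine expect_mono hQ fun ω _ => ?_
  have hind : ∀ k, (0 : ℝ) ≤ if E k ω then 1 else 0 := fun k => by split_ifs <;> norm_num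
  split_ifs with h
  · obtain ⟨k, hk, hE⟩ := h
    simpa only [if_pos hE] using Finset.single_le_sum (fun k _ => hind k) hk
  · exact Finset.sum_nonneg fun k _ => hind k

lemma prob_or_le (hQ : IsDist Q) (E F : Ω → Prop) :
    prob Q (fun ω => E ω ∨ F ω) ≤ prob Q E + prob Q F := by
  rw [prob, prob, prob, ← expect_add]
  refine expect_mono hQ fun ω _ => ?_
  by_cases hE : E ω <;> by_cases hF : F ω <;> simp [hE, hF]

lemma prob_le_mul_prob {R : Ω → ℝ} {c : ℝ} {E : Ω → Prop} (h : ∀ ω, E ω → Q ω ≤ c * R ω) :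
    prob Q E ≤ c * prob R E := by
  rw [prob, prob, ← expect_const_mul]
  refine Finset.sum_le_sum fun ω _ => ?_
  by_cases hE : E ω
  · simpa only [if_pos hE, mul_one, mul_comm (R ω)] using h ω hE
  · simp only [if_neg hE, mul_zero, le_refl]

lemma prob_le_expect_sub_le (hQ : IsDist Q) (f : Ω → ℝ) {t : ℝ} (ht : 0 < t) :
    prob Q (fun ω => f ω ≤ expect Q f - t) ≤ varD Q f / t ^ 2 := by
  rw [le_div_iff₀ (by positivity), mul_comm, prob, ← expect_const_mul]
  refine expect_mono hQ fun ω _ => ?_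
  split_ifs with hω
  · rw [mul_one]
    nlinarith
  · rw [mul_zero]
    exact sq_nonneg _

end FiniteProbability

/-! ### Product laws -/

lemma sum_erase_update {κ Y : Type*} [DecidableEq κ] (s : Finset κ) (g : κ → Y → ℝ) (k : κ)
    (x : κ → Y) (a : Y) :
    ∑ l ∈ s.erase k, g l (Function.update x k a l) = ∑ l ∈ s.erase k, g l (x l) :=
  Finset.sum_congr rfl fun l hl => by rw [Function.update_of_ne (Finset.ne_of_mem_erase hl)]

section ProductLaws

variable {κ Y : Type*} [Fintype κ] {p : κ → Y → ℝ}

/-- The law of independent coordinates `x k` with laws `p k`; `seqProb` is the case of equal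
`p k`. -/
noncomputable def piLaw (p : κ → Y → ℝ) (x : κ → Y) : ℝ := ∏ k, p k (x k)

lemma pos_of_piLaw_pos [Fintype Y] (hp : ∀ k, IsDist (p k)) {x : κ → Y} (hx : 0 < piLaw p x)
    (k : κ) : 0 < p k (x k) :=
  ((hp k).1 _).lt_of_ne' fun h0 => hx.ne' (Finset.prod_eq_zero (Finset.mem_univ k) h0)

variable [DecidableEq κ]

lemma piLaw_update_mul (p : κ → Y → ℝ) (x : κ → Y) (k : κ) (a : Y) :
    piLaw p (Function.update x k a) * p k (x k) = piLaw p x * p k a := by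
  have herase : ∏ l ∈ Finset.univ.erase k, p l (Function.update x k a l) =
      ∏ l ∈ Finset.univ.erase k, p l (x l) :=
    Finset.prod_congr rfl fun l hl => by rw [Function.update_of_ne (Finset.ne_of_mem_erase hl)]
  rw [piLaw, piLaw, ← Finset.mul_prod_erase _ _ (Finset.mem_univ k),
    ← Finset.mul_prod_erase Finset.univ (fun l => p l (x l)) (Finset.mem_univ k),
    Function.update_self, herase]
  ring

variable [Fintype Y]

lemma isDist_piLaw (hp : ∀ k, IsDist (p k)) : IsDist (piLaw p) := by
  refine ⟨fun x => Finset.prod_nonneg fun k _ => (hp k).1 _, ?_⟩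
  simp only [piLaw]
  rw [← Fintype.piFinset_univ, ← Finset.prod_univ_sum]
  exact Finset.prod_eq_one fun k _ => (hp k).2

lemma expect_piLaw_update (hp : ∀ k, IsDist (p k)) (k : κ) (F : (κ → Y) → ℝ) :
    expect (piLaw p) (fun x => expect (p k) fun a => F (Function.update x k a)) =
      expect (piLaw p) F := by
  have hpair : ∀ G : (κ → Y) × Y → ℝ, expect (piLaw p) (fun x => expect (p k) fun a => G (x, a)) =
      ∑ q : (κ → Y) × Y, piLaw p q.1 * p k q.2 * G q := fun G => by
    simp only [expect, Finset.mul_sum, mul_assoc, Fintype.sum_prod_type]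
  have hconst : expect (piLaw p) F = expect (piLaw p) (fun x => expect (p k) fun _ => F x) := by
    simp only [expect_const (hp k)]
  rw [hconst, hpair fun q => F (Function.update q.1 k q.2), hpair fun q => F q.1]
  -- Exchanging `x k` with the fresh coordinate `a` preserves the joint law.
  refine Finset.sum_nbij' (fun q => (Function.update q.1 k q.2, q.1 k))
    (fun q => (Function.update q.1 k q.2, q.1 k)) (by simp) (by simp) (by simp) (by simp) ?_
  rintro ⟨x, a⟩ _
  rw [piLaw_update_mul]

lemma expect_piLaw_mul (hp : ∀ k, IsDist (p k)) (k : κ) (g : Y → ℝ) {H : (κ → Y) → ℝ}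
    (hH : ∀ x a, H (Function.update x k a) = H x) :
    expect (piLaw p) (fun x => g (x k) * H x) = expect (p k) g * expect (piLaw p) H := by
  rw [← expect_piLaw_update hp k, ← expect_const_mul]
  congr 1 with x
  simp only [Function.update_self, hH]
  rw [mul_comm, ← expect_const_mul]
  simp only [mul_comm]

lemma expect_piLaw_apply (hp : ∀ k, IsDist (p k)) (k : κ) (g : Y → ℝ) :
    expect (piLaw p) (fun x => g (x k)) = expect (p k) g := by
  simpa only [mul_one, expect_const (isDist_piLaw hp)] using
    expect_piLaw_mul hp k g (H := fun _ => 1) fun _ _ => rfl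

lemma expect_piLaw_sum (hp : ∀ k, IsDist (p k)) (g : κ → Y → ℝ) :
    expect (piLaw p) (fun x => ∑ k, g k (x k)) = ∑ k, expect (p k) (g k) := by
  rw [expect_finsetSum]
  exact Finset.sum_congr rfl fun k _ => expect_piLaw_apply hp k (g k)

lemma expect_piLaw_sq_sum (hp : ∀ k, IsDist (p k)) {ξ : κ → Y → ℝ}
    (h0 : ∀ k, expect (p k) (ξ k) = 0) :
    expect (piLaw p) (fun x => (∑ k, ξ k (x k)) ^ 2) =
      ∑ k, expect (p k) (fun a => ξ k a ^ 2) := by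
  have hexpand : ∀ x : κ → Y, (∑ k, ξ k (x k)) ^ 2 =
      ∑ k, (ξ k (x k) ^ 2 + ξ k (x k) * ∑ l ∈ Finset.univ.erase k, ξ l (x l)) := fun x => by
    rw [sq, Finset.sum_mul]
    refine Finset.sum_congr rfl fun k _ => ?_
    rw [← Finset.add_sum_erase _ (fun k => ξ k (x k)) (Finset.mem_univ k)]
    ring
  simp only [hexpand]
  rw [expect_finsetSum]
  refine Finset.sum_congr rfl fun k _ => ?_
  rw [expect_add, expect_piLaw_apply hp k fun a => ξ k a ^ 2,
    expect_piLaw_mul hp k (ξ k) (sum_erase_update _ ξ k), h0, zero_mul, add_zero]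

lemma varD_piLaw_sum (hp : ∀ k, IsDist (p k)) (g : κ → Y → ℝ) :
    varD (piLaw p) (fun x => ∑ k, g k (x k)) = ∑ k, varD (p k) (g k) := by
  simp only [varD]
  rw [expect_piLaw_sum hp, ← expect_piLaw_sq_sum hp fun k => ?_]
  · simp only [Finset.sum_sub_distrib]
  · simp only [sub_eq_add_neg, expect_add, expect_const (hp k), add_neg_cancel]

end ProductLaws

section PairLaws

variable {Ω Ω' : Type*} [Fintype Ω] [Fintype Ω']

/-- The law of an independent pair. -/
noncomputable def prodLaw (Q : Ω → ℝ) (R : Ω' → ℝ) (ω : Ω × Ω') : ℝ := Q ω.1 * R ω.2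

lemma expect_prodLaw (Q : Ω → ℝ) (R : Ω' → ℝ) (F : Ω × Ω' → ℝ) :
    expect (prodLaw Q R) F = expect R fun ω' => expect Q fun ω => F (ω, ω') := by
  simp only [expect, prodLaw, Fintype.sum_prod_type_right, Finset.mul_sum]
  exact Finset.sum_congr rfl fun ω' _ => Finset.sum_congr rfl fun ω _ => by ring

lemma isDist_prodLaw {Q : Ω → ℝ} {R : Ω' → ℝ} (hQ : IsDist Q) (hR : IsDist R) :
    IsDist (prodLaw Q R) := by
  refine ⟨fun ω => mul_nonneg (hQ.1 _) (hR.1 _), ?_⟩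
  have h := expect_prodLaw Q R fun _ => 1
  rw [expect_const hQ, expect_const hR] at h
  simpa only [expect, mul_one] using h

lemma pos_of_prodLaw_pos {Q : Ω → ℝ} {R : Ω' → ℝ} (hQ : IsDist Q) (hR : IsDist R) {ω : Ω × Ω'}
    (hω : 0 < prodLaw Q R ω) : 0 < Q ω.1 ∧ 0 < R ω.2 :=
  ⟨(hQ.1 _).lt_of_ne' (left_ne_zero_of_mul hω.ne'),
    (hR.1 _).lt_of_ne' (right_ne_zero_of_mul hω.ne')⟩

lemma prob_prodLaw_piLaw_apply {κ : Type*} [Fintype κ] [DecidableEq κ] {p : κ → Ω → ℝ}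
    (hp : ∀ k, IsDist (p k)) (R : Ω' → ℝ) (k : κ) (E : Ω × Ω' → Prop) :
    prob (prodLaw (piLaw p) R) (fun ω => E (ω.1 k, ω.2)) = prob (prodLaw (p k) R) E := by
  classical
  rw [prob, prob, expect_prodLaw, expect_prodLaw]
  congr 1 with ω'
  exact expect_piLaw_apply hp k fun ω => if E (ω, ω') then 1 else 0

lemma expect_prodLaw_piLaw {κ κ' Y : Type*} [Fintype κ] [DecidableEq κ] [Fintype κ']
    [DecidableEq κ'] [Fintype Y] (p : κ → Y → ℝ) (q : κ' → Y → ℝ) (F : (κ → Y) × (κ' → Y) → ℝ) :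
    expect (prodLaw (piLaw p) (piLaw q)) F =
      expect (piLaw (Sum.elim p q)) fun x => F (x ∘ Sum.inl, x ∘ Sum.inr) := by
  refine (Fintype.sum_equiv (Equiv.sumArrowEquivProdArrow κ κ' Y) _ _ fun x => ?_).symm
  simp only [piLaw, prodLaw, Fintype.prod_sum_type, Sum.elim_inl, Sum.elim_inr]
  rfl

end PairLaws

/-! ### The Berry–Esseen bound -/

section BerryEsseen

variable {κ Y : Type*} [Fintype κ] [DecidableEq κ] [Fintype Y] {p : κ → Y → ℝ}
  {ξ : κ → Y → ℝ} {δ : ℝ}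

lemma expect_sum_mul_comp_sum (hp : ∀ k, IsDist (p k)) (h0 : ∀ k, expect (p k) (ξ k) = 0)
    (f : ℝ → ℝ) :
    expect (piLaw p) (fun x => (∑ k, ξ k (x k)) * f (∑ k, ξ k (x k))) =
      ∑ k, expect (piLaw p) fun x =>
        ξ k (x k) * (f (∑ l, ξ l (x l)) - f (∑ l ∈ Finset.univ.erase k, ξ l (x l))) := by
  simp only [Finset.sum_mul]
  rw [expect_finsetSum]
  refine Finset.sum_congr rfl fun k _ => ?_
  have hindep : expect (piLaw p)
      (fun x => ξ k (x k) * f (∑ l ∈ Finset.univ.erase k, ξ l (x l))) = 0 := by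
    rw [expect_piLaw_mul hp k (ξ k) (H := fun x => f (∑ l ∈ Finset.univ.erase k, ξ l (x l)))
      fun x a => by rw [sum_erase_update], h0, zero_mul]
  rw [← sub_zero (expect _ _), ← hindep, sub_eq_iff_eq_add, ← expect_add]
  simp only [mul_sub, sub_add_cancel]

lemma expect_steinMinorant_le (hp : ∀ k, IsDist (p k)) (h0 : ∀ k, expect (p k) (ξ k) = 0)
    (hvar : ∑ k, expect (p k) (fun a => ξ k a ^ 2) = 1) (hδ0 : 0 ≤ δ) (hδ1 : δ ≤ 1)
    (hξ : ∀ k a, |ξ k a| ≤ δ) (z : ℝ) :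
    expect (piLaw p) (fun x => steinMinorant z (δ + δ) (∑ k, ξ k (x k))) ≤
      expect (piLaw p) (fun x => (∑ k, ξ k (x k)) * steinSol z (∑ k, ξ k (x k))) := by
  have hPi := isDist_piLaw hp
  have hW : ∀ (x : κ → Y) k,
      ∑ l, ξ l (x l) = ∑ l ∈ Finset.univ.erase k, ξ l (x l) + ξ k (x k) := fun x k =>
    (Finset.sum_erase_add _ _ (Finset.mem_univ k)).symm
  rw [expect_sum_mul_comp_sum hp h0, ← one_mul (expect _ _), ← hvar, Finset.sum_mul]
  refine Finset.sum_le_sum fun k _ => ?_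
  calc expect (p k) (fun a => ξ k a ^ 2) *
        expect (piLaw p) (fun x => steinMinorant z (δ + δ) (∑ l, ξ l (x l)))
      ≤ expect (p k) (fun a => ξ k a ^ 2) *
        expect (piLaw p) (fun x => steinMinorant z δ (∑ l ∈ Finset.univ.erase k, ξ l (x l))) := by
        refine mul_le_mul_of_nonneg_left (expect_mono hPi fun x _ => ?_) ?_
        · refine steinMinorant_add_le hδ0 hδ1 ?_
          rw [hW x k, sub_add_cancel_left, abs_neg]
          exact hξ k (x k)
        · rw [← expect_const (hp k) 0]
          exact expect_mono (hp k) fun a _ => sq_nonneg _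
    _ = expect (piLaw p) (fun x =>
          ξ k (x k) ^ 2 * steinMinorant z δ (∑ l ∈ Finset.univ.erase k, ξ l (x l))) :=
        (expect_piLaw_mul hp k (fun a => ξ k a ^ 2) fun x a => by rw [sum_erase_update]).symm
    _ ≤ _ := expect_mono hPi fun x _ => by
        rw [hW x k]
        exact sq_mul_steinMinorant_le (hξ k (x k))

lemma expect_abs_sum_le_one (hp : ∀ k, IsDist (p k)) (h0 : ∀ k, expect (p k) (ξ k) = 0)
    (hvar : ∑ k, expect (p k) (fun a => ξ k a ^ 2) = 1) :
    expect (piLaw p) (fun x => |∑ k, ξ k (x k)|) ≤ 1 := by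
  have hPi := isDist_piLaw hp
  calc expect (piLaw p) (fun x => |∑ k, ξ k (x k)|)
      ≤ expect (piLaw p) (fun x => 1 / 2 + 1 / 2 * (∑ k, ξ k (x k)) ^ 2) :=
        expect_mono hPi fun x _ => by
          have habs := sq_nonneg (|∑ k, ξ k (x k)| - 1)
          rw [sub_sq, sq_abs] at habs
          linarith
    _ = 1 := by
        rw [expect_add, expect_const hPi, expect_const_mul, expect_piLaw_sq_sum hp h0, hvar]
        norm_num

lemma prob_sum_lt_le (hp : ∀ k, IsDist (p k)) (h0 : ∀ k, expect (p k) (ξ k) = 0)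
    (hvar : ∑ k, expect (p k) (fun a => ξ k a ^ 2) = 1) (hδ0 : 0 ≤ δ) (hδ1 : δ ≤ 1)
    (hξ : ∀ k a, |ξ k a| ≤ δ) (z : ℝ) :
    prob (piLaw p) (fun x => ∑ k, ξ k (x k) < z - 2 * δ) ≤ stdCDF z + 14 * δ := by
  have hPi := isDist_piLaw hp
  have hexpand : expect (piLaw p) (fun x => steinMinorant z (δ + δ) (∑ k, ξ k (x k))) =
      expect (piLaw p) (fun x => (∑ k, ξ k (x k)) * steinSol z (∑ k, ξ k (x k))) +
        -(2 * δ) * (2 * expect (piLaw p) (fun x => |∑ k, ξ k (x k)|) + 5) +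
        prob (piLaw p) (fun x => ∑ k, ξ k (x k) < z - 2 * δ) + -stdCDF z := by
    rw [prob, ← expect_const hPi (-stdCDF z), ← expect_const hPi 5, ← expect_const_mul,
      ← expect_add, ← expect_const_mul, ← expect_add, ← expect_add, ← expect_add]
    congr 1 with x
    simp only [steinMinorant, ← two_mul]
    ring
  have hstein := expect_steinMinorant_le hp h0 hvar hδ0 hδ1 hξ z
  rw [hexpand] at hstein
  nlinarith [expect_abs_sum_le_one hp h0 hvar]

lemma prob_sum_le_le (hp : ∀ k, IsDist (p k)) (h0 : ∀ k, expect (p k) (ξ k) = 0)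
    (hvar : ∑ k, expect (p k) (fun a => ξ k a ^ 2) = 1) (hδ0 : 0 < δ) (hδ1 : δ ≤ 1)
    (hξ : ∀ k a, |ξ k a| ≤ δ) (r : ℝ) :
    prob (piLaw p) (fun x => ∑ k, ξ k (x k) ≤ r) ≤ stdCDF r + 17 * δ := by
  have hlt := prob_sum_lt_le hp h0 hvar hδ0.le hδ1 hξ (r + 3 * δ)
  have hmono : prob (piLaw p) (fun x => ∑ k, ξ k (x k) ≤ r) ≤
      prob (piLaw p) (fun x => ∑ k, ξ k (x k) < r + 3 * δ - 2 * δ) :=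
    prob_mono (isDist_piLaw hp) fun x _ hx => by linarith
  linarith [stdCDF_sub_le (show r ≤ r + 3 * δ by linarith)]

lemma abs_prob_sum_le_sub_stdCDF_le (hp : ∀ k, IsDist (p k))
    (h0 : ∀ k, expect (p k) (ξ k) = 0) (hvar : ∑ k, expect (p k) (fun a => ξ k a ^ 2) = 1)
    (hδ0 : 0 < δ) (hξ : ∀ k a, |ξ k a| ≤ δ) (r : ℝ) :
    |prob (piLaw p) (fun x => ∑ k, ξ k (x k) ≤ r) - stdCDF r| ≤ 17 * δ := by
  have hPi := isDist_piLaw hp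
  rcases le_total δ 1 with hδ1 | hδ1
  · refine abs_sub_le_iff.2 ⟨by linarith [prob_sum_le_le hp h0 hvar hδ0 hδ1 hξ r], ?_⟩
    have hneg := prob_sum_le_le (ξ := fun k a => -ξ k a) hp
      (fun k => by simpa only [neg_one_mul, h0 k, mul_zero] using expect_const_mul (p k) (-1) (ξ k))
      (by simpa only [neg_sq] using hvar) hδ0 hδ1 (by simpa only [abs_neg] using hξ) (-r)
    have hcompl : 1 - prob (piLaw p) (fun x => ∑ k, ξ k (x k) ≤ r) ≤
        prob (piLaw p) (fun x => ∑ k, -ξ k (x k) ≤ -r) := by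
      rw [← prob_not hPi]
      refine prob_mono hPi fun x _ hx => ?_
      rw [Finset.sum_neg_distrib]
      linarith [not_le.1 hx]
    linarith [stdCDF_neg r]
  · refine abs_sub_le_iff.2 ⟨?_, ?_⟩ <;>
      linarith [prob_nonneg hPi fun x => ∑ k, ξ k (x k) ≤ r,
        prob_le_one hPi fun x => ∑ k, ξ k (x k) ≤ r, stdCDF_nonneg r, stdCDF_le_one r]

theorem berryEsseen (hp : ∀ k, IsDist (p k)) {g : κ → Y → ℝ} {D μ s : ℝ}
    (hμ : ∑ k, expect (p k) (g k) = μ) (hs : ∑ k, varD (p k) (g k) = s ^ 2) (hs0 : 0 < s)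
    (hD : 0 < D) (hg : ∀ k a, |g k a - expect (p k) (g k)| ≤ D) (r : ℝ) :
    |prob (piLaw p) (fun x => ∑ k, g k (x k) ≤ μ + s * r) - stdCDF r| ≤ 17 * (D / s) := by
  have hcentred : ∀ k, expect (p k) (fun a => s⁻¹ * (g k a - expect (p k) (g k))) = 0 := fun k => by
    rw [expect_const_mul]
    simp only [sub_eq_add_neg, expect_add, expect_const (hp k), add_neg_cancel, mul_zero]
  have hunit : ∑ k, expect (p k) (fun a => (s⁻¹ * (g k a - expect (p k) (g k))) ^ 2) = 1 := by
    simp only [mul_pow, expect_const_mul]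
    rw [← Finset.mul_sum]
    exact (congrArg _ hs).trans (by field_simp)
  have hbound : ∀ k a, |s⁻¹ * (g k a - expect (p k) (g k))| ≤ D / s := fun k a => by
    rw [abs_mul, abs_of_pos (inv_pos.2 hs0), inv_mul_eq_div]
    gcongr
    exact hg k a
  have hevent : (fun x : κ → Y => ∑ k, g k (x k) ≤ μ + s * r) =
      fun x => ∑ k, s⁻¹ * (g k (x k) - expect (p k) (g k)) ≤ r := by
    ext x
    rw [← Finset.mul_sum, Finset.sum_sub_distrib, hμ, inv_mul_le_iff₀ hs0, sub_le_iff_le_add']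
  rw [hevent]
  exact abs_prob_sum_le_sub_stdCDF_le hp hcentred hunit (by positivity) hbound r

end BerryEsseen

/-! ### Divergences and information densities -/

lemma sub_lt_mul_log_div {t r : ℝ} (ht : 0 ≤ t) (hr : 0 ≤ r) (h : t ≠ 0 → r ≠ 0) (hne : t ≠ r) :
    t - r < t * Real.log (t / r) := by
  obtain rfl | ht0 := ht.eq_or_lt
  · simpa using hr.lt_of_ne hne
  · have hr0 := hr.lt_of_ne' (h ht0.ne')
    have hlog := Real.log_lt_sub_one_of_pos (div_pos hr0 ht0) fun h1 =>
      hne ((div_eq_one_iff_eq ht0.ne').1 h1).symm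
    rw [← inv_div, Real.log_inv, neg_lt, neg_sub] at hlog
    calc t - r = t * (1 - (t / r)⁻¹) := by field_simp
      _ < t * Real.log (t / r) := mul_lt_mul_of_pos_left hlog ht0

lemma sub_le_mul_log_div {t r : ℝ} (ht : 0 ≤ t) (hr : 0 ≤ r) (h : t ≠ 0 → r ≠ 0) :
    t - r ≤ t * Real.log (t / r) := by
  obtain rfl | hne := eq_or_ne t r
  · obtain rfl | ht0 := ht.eq_or_lt <;> simp [*, ne_of_gt]
  · exact (sub_lt_mul_log_div ht hr h hne).le

section Divergences

variable {Y : Type*} {P1 P2 T1 T2 Q : Y → ℝ} {α : ℝ}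

lemma iDens1_eq_log_div_mix (P1 P2 : Y → ℝ) (α : ℝ) (x : Y) :
    iDens1 P1 P2 α x = Real.log (P1 x / mix P1 P2 α x) := by
  rw [iDens1, mix, div_div_eq_mul_div, mul_comm (P1 x)]

lemma iDens2_eq_log_div_mix (P1 P2 : Y → ℝ) (α : ℝ) (x : Y) :
    iDens2 P1 P2 α x = Real.log (P2 x / mix P1 P2 α x) := by
  rw [iDens2, mix, div_div_eq_mul_div, mul_comm (P2 x)]

variable [Fintype Y]

lemma GJS_eq_expect (P1 P2 : Y → ℝ) (α : ℝ) :
    GJS P1 P2 α = α * expect P1 (iDens1 P1 P2 α) + expect P2 (iDens2 P1 P2 α) := by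
  simp only [GJS, klDivR, expect, iDens1_eq_log_div_mix, iDens2_eq_log_div_mix]

lemma mix_pos_of_left (hα : 0 < α) (h1 : IsDist P1) (h2 : IsDist P2) {x : Y} (hx : P1 x ≠ 0) :
    0 < mix P1 P2 α x := by
  have hpos := (h1.1 x).lt_of_ne' hx
  have := h2.1 x
  rw [mix]
  positivity

lemma mix_pos_of_right (hα : 0 < α) (h1 : IsDist P1) (h2 : IsDist P2) {x : Y} (hx : P2 x ≠ 0) :
    0 < mix P1 P2 α x := by
  have hpos := (h2.1 x).lt_of_ne' hx
  have := h1.1 x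
  rw [mix]
  positivity

lemma expect_mix (hα : 0 < α) (P1 P2 : Y → ℝ) (f : Y → ℝ) :
    (1 + α) * expect (mix P1 P2 α) f = α * expect P1 f + expect P2 f := by
  simp only [expect, Finset.mul_sum, ← Finset.sum_add_distrib, mix]
  refine Finset.sum_congr rfl fun x _ => ?_
  field_simp

lemma isDist_mix (hα : 0 < α) (h1 : IsDist P1) (h2 : IsDist P2) : IsDist (mix P1 P2 α) := by
  refine ⟨fun x => ?_, ?_⟩
  · have := h1.1 x
    have := h2.1 x
    rw [mix]
    positivity
  · have h := expect_mix hα P1 P2 fun _ => 1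
    simp only [expect, mul_one, h1.2, h2.2, add_comm α] at h
    exact mul_left_cancel₀ (by positivity : (1 + α) ≠ 0) (h.trans (mul_one _).symm)

lemma klDivR_eq_add_expect {T R R' : Y → ℝ} (h : ∀ x, T x ≠ 0 → R x ≠ 0)
    (h' : ∀ x, T x ≠ 0 → R' x ≠ 0) :
    klDivR T R' = klDivR T R + expect T fun x => Real.log (R x / R' x) := by
  rw [klDivR, klDivR, expect, ← Finset.sum_add_distrib]
  refine Finset.sum_congr rfl fun x _ => ?_
  by_cases hT : T x = 0
  · simp only [hT, zero_mul, add_zero]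
  · rw [← mul_add, ← Real.log_mul (div_ne_zero hT (h x hT)) (div_ne_zero (h x hT) (h' x hT)),
      div_mul_div_cancel₀ (h x hT)]

lemma sum_sub_sum_le_klDivR {T R : Y → ℝ} (hT : ∀ x, 0 ≤ T x) (hR : ∀ x, 0 ≤ R x)
    (h : ∀ x, T x ≠ 0 → R x ≠ 0) : ∑ x, T x - ∑ x, R x ≤ klDivR T R := by
  rw [← Finset.sum_sub_distrib]
  exact Finset.sum_le_sum fun x _ => sub_le_mul_log_div (hT x) (hR x) (h x)

lemma klDivR_nonneg {T R : Y → ℝ} (hT : IsDist T) (hR : IsDist R) (h : ∀ x, T x ≠ 0 → R x ≠ 0) :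
    0 ≤ klDivR T R := by
  simpa only [hT.2, hR.2, sub_self] using sum_sub_sum_le_klDivR hT.1 hR.1 h

lemma klDivR_pos {T R : Y → ℝ} (hT : IsDist T) (hR : IsDist R) (h : ∀ x, T x ≠ 0 → R x ≠ 0)
    (hne : T ≠ R) : 0 < klDivR T R := by
  obtain ⟨x, hx⟩ := Function.ne_iff.1 hne
  calc 0 = ∑ x, (T x - R x) := by rw [Finset.sum_sub_distrib, hT.2, hR.2, sub_self]
    _ < klDivR T R := Finset.sum_lt_sum
      (fun x _ => sub_le_mul_log_div (hT.1 x) (hR.1 x) (h x))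
      ⟨x, Finset.mem_univ x, sub_lt_mul_log_div (hT.1 x) (hR.1 x) (h x) hx⟩

lemma GJS_pos (hα : 0 < α) (h1 : IsDist P1) (h2 : IsDist P2) (hne : P1 ≠ P2) :
    0 < GJS P1 P2 α := by
  have hm := isDist_mix hα h1 h2
  refine add_pos_of_nonneg_of_pos
    (mul_nonneg hα.le (klDivR_nonneg h1 hm fun x hx => (mix_pos_of_left hα h1 h2 hx).ne'))
    (klDivR_pos h2 hm (fun x hx => (mix_pos_of_right hα h1 h2 hx).ne') fun heq => hne ?_)
  funext x
  have hx := congrFun heq x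
  rw [mix, eq_div_iff (by positivity), mul_add, mul_one, add_comm, mul_comm] at hx
  exact (mul_left_cancel₀ hα.ne' (add_right_cancel hx)).symm

-- The two sides differ by `(1 + α) D(mix T1 T2 α ‖ Q)`.
lemma GJS_le_klDivR_add_klDivR (hα : 0 < α) (h1 : IsDist T1) (h2 : IsDist T2) (hQ : IsDist Q)
    (hac1 : ∀ x, T1 x ≠ 0 → Q x ≠ 0) (hac2 : ∀ x, T2 x ≠ 0 → Q x ≠ 0) :
    GJS T1 T2 α ≤ α * klDivR T1 Q + klDivR T2 Q := by
  have hac : ∀ x, mix T1 T2 α x ≠ 0 → Q x ≠ 0 := fun x hx hQx => hx <| by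
    rw [mix, not_imp_not.1 (hac1 x) hQx, not_imp_not.1 (hac2 x) hQx, mul_zero, add_zero, zero_div]
  have hmix := expect_mix hα T1 T2 fun x => Real.log (mix T1 T2 α x / Q x)
  have hnonneg := mul_nonneg (by positivity : 0 ≤ 1 + α)
    (klDivR_nonneg (isDist_mix hα h1 h2) hQ hac)
  rw [klDivR_eq_add_expect (fun x hx => (mix_pos_of_left hα h1 h2 hx).ne') hac1,
    klDivR_eq_add_expect (fun x hx => (mix_pos_of_right hα h1 h2 hx).ne') hac2, GJS]
  rw [expect, ← klDivR] at hmix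
  linarith

lemma one_sub_expect_div_le {T P m r : Y → ℝ} (hT : IsDist T) (hP : ∀ x, 0 ≤ P x)
    (hm : ∀ x, 0 ≤ m x) (hr : ∀ x, 0 ≤ r x) (hTP : ∀ x, T x ≠ 0 → P x ≠ 0)
    (hTm : ∀ x, T x ≠ 0 → m x ≠ 0) (hPr : ∀ x, P x ≠ 0 → r x ≠ 0) :
    1 - expect P (fun x => m x / r x) ≤ klDivR T m - expect T fun x => Real.log (P x / r x) := by
  have hTR : ∀ x, T x ≠ 0 → P x * (m x / r x) ≠ 0 := fun x hx =>
    mul_ne_zero (hTP x hx) (div_ne_zero (hTm x hx) (hPr x (hTP x hx)))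
  have hlog : (expect T fun x => Real.log (P x * (m x / r x) / m x)) =
      expect T fun x => Real.log (P x / r x) := Finset.sum_congr rfl fun x _ => by
    by_cases hx : T x = 0
    · simp only [hx, zero_mul]
    · simp only [mul_div_left_comm (P x), mul_div_cancel_left₀ _ (hTm x hx)]
  rw [klDivR_eq_add_expect hTR hTm, hlog, add_sub_cancel_right, ← hT.2]
  exact sum_sub_sum_le_klDivR hT.1
    (fun x => mul_nonneg (hP x) (div_nonneg (hm x) (hr x))) hTR

-- The left side is the tangent plane of the convex function `GJS` at `(P1, P2)`; the gap is
-- `α D(T1 ‖ R 1) + D(T2 ‖ R 2)` with `R i = P i * (mix T1 T2 α / mix P1 P2 α)`.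
/-- `GJS` is jointly convex, and the left-hand side is its tangent plane at `(P1, P2)`. -/
lemma expect_iDens_le_GJS (hα : 0 < α) (h1 : IsDist T1) (h2 : IsDist T2) (hP1 : IsDist P1)
    (hP2 : IsDist P2) (hac1 : ∀ x, T1 x ≠ 0 → P1 x ≠ 0) (hac2 : ∀ x, T2 x ≠ 0 → P2 x ≠ 0) :
    α * expect T1 (iDens1 P1 P2 α) + expect T2 (iDens2 P1 P2 α) ≤ GJS T1 T2 α := by
  have hm := isDist_mix hα h1 h2
  have hr := isDist_mix hα hP1 hP2
  have hgap1 := one_sub_expect_div_le h1 hP1.1 hm.1 hr.1 hac1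
    (fun x hx => (mix_pos_of_left hα h1 h2 hx).ne')
    fun x hx => (mix_pos_of_left hα hP1 hP2 hx).ne'
  have hgap2 := one_sub_expect_div_le h2 hP2.1 hm.1 hr.1 hac2
    (fun x hx => (mix_pos_of_right hα h1 h2 hx).ne')
    fun x hx => (mix_pos_of_right hα hP1 hP2 hx).ne'
  have hmass : expect (mix P1 P2 α) (fun x => mix T1 T2 α x / mix P1 P2 α x) ≤ 1 := by
    rw [← hm.2]
    refine Finset.sum_le_sum fun x _ => ?_
    rw [mul_div_left_comm]
    exact mul_le_of_le_one_right (hm.1 x) (div_self_le_one _)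
  have hmix := expect_mix hα P1 P2 fun x => mix T1 T2 α x / mix P1 P2 α x
  simp only [← iDens1_eq_log_div_mix, ← iDens2_eq_log_div_mix] at hgap1 hgap2
  rw [GJS]
  nlinarith

end Divergences

/-! ### Types -/

section Types

variable {Y : Type*} {m : ℕ}

lemma seqProb_le_seqProb_mul_exp {P Q f : Y → ℝ} {x : Fin m → Y} (hP : ∀ a, 0 ≤ P a)
    (h : ∀ t, P (x t) ≤ Q (x t) * Real.exp (f (x t))) :
    seqProb P x ≤ seqProb Q x * Real.exp (∑ t, f (x t)) := by
  rw [seqProb, seqProb, Real.exp_sum, ← Finset.prod_mul_distrib]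
  exact Finset.prod_le_prod (fun t _ => hP _) fun t _ => h t

variable [DecidableEq Y]

lemma empDist_apply_pos (x : Fin m → Y) (t : Fin m) : 0 < empDist x (x t) := by
  have hm : 0 < m := t.pos
  have hcard : 0 < (Finset.univ.filter fun i => x i = x t).card :=
    Finset.card_pos.2 ⟨t, by simp⟩
  rw [empDist]
  positivity

lemma exists_eq_of_empDist_ne_zero {x : Fin m → Y} {a : Y} (h : empDist x a ≠ 0) :
    ∃ t, x t = a := by
  contrapose! h
  simp [empDist, h]

variable [Fintype Y]

lemma sum_comp_eq_mul_expect_empDist (x : Fin m → Y) (f : Y → ℝ) :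
    ∑ t, f (x t) = m * expect (empDist x) f := by
  rcases m.eq_zero_or_pos with rfl | hm
  · simp
  rw [← Finset.sum_fiberwise Finset.univ x fun t => f (x t), expect, Finset.mul_sum]
  refine Finset.sum_congr rfl fun a _ => ?_
  rw [Finset.sum_congr rfl fun t ht => by rw [(Finset.mem_filter.1 ht).2], Finset.sum_const,
    nsmul_eq_mul, empDist]
  field_simp

lemma isDist_empDist (hm : 0 < m) (x : Fin m → Y) : IsDist (empDist x) := by
  refine ⟨fun a => by rw [empDist]; positivity, ?_⟩
  have h := sum_comp_eq_mul_expect_empDist x fun _ => 1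
  rw [Finset.sum_const, Finset.card_univ, Fintype.card_fin, nsmul_one] at h
  simpa only [expect, mul_one] using
    mul_left_cancel₀ (Nat.cast_ne_zero.2 hm.ne') (h.symm.trans (mul_one _).symm)

lemma seqProb_le_seqProb_empDist_mul_exp {Q : Y → ℝ} (hQ : ∀ a, 0 ≤ Q a) (x : Fin m → Y) :
    seqProb Q x ≤ seqProb (empDist x) x * Real.exp (-(m * klDivR (empDist x) Q)) := by
  have hsum : ∑ t, -Real.log (empDist x (x t) / Q (x t)) = -(m * klDivR (empDist x) Q) := by
    rw [Finset.sum_neg_distrib, neg_inj]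
    exact sum_comp_eq_mul_expect_empDist x fun a => Real.log (empDist x a / Q a)
  rw [← hsum]
  refine seqProb_le_seqProb_mul_exp (f := fun a => -Real.log (empDist x a / Q a)) hQ fun t => ?_
  rcases (hQ (x t)).eq_or_lt with h0 | hpos
  · exact h0 ▸ mul_nonneg (empDist_apply_pos x t).le (Real.exp_nonneg _)
  · have hT := empDist_apply_pos x t
    rw [← Real.log_inv, inv_div, Real.exp_log (by positivity), mul_div_cancel₀ _ hT.ne']

lemma seqProb_mul_seqProb_le_exp_GJS {n : ℕ} (hm : 0 < m) (hn : 0 < n) {α : ℝ} (hα : 0 < α)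
    (hmn : α * n ≤ m) {Q : Y → ℝ} (hQ : IsDist Q) (x : Fin m → Y) (y : Fin n → Y) :
    seqProb Q x * seqProb Q y ≤ seqProb (empDist x) x * seqProb (empDist y) y *
      Real.exp (-(n * GJS (empDist x) (empDist y) α)) := by
  have hTx := isDist_empDist hm x
  have hTy := isDist_empDist hn y
  have hprob : ∀ {k : ℕ} {R : Y → ℝ}, IsDist R → ∀ z : Fin k → Y, 0 ≤ seqProb R z :=
    fun hR z => Finset.prod_nonneg fun t _ => hR.1 _
  have hx := seqProb_le_seqProb_empDist_mul_exp hQ.1 x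
  have hy := seqProb_le_seqProb_empDist_mul_exp hQ.1 y
  rcases (mul_nonneg (hprob hQ x) (hprob hQ y)).eq_or_lt with h0 | hpos
  · rw [← h0]
    exact mul_nonneg (mul_nonneg (hprob hTx x) (hprob hTy y)) (Real.exp_nonneg _)
  have hac : ∀ {k : ℕ} {z : Fin k → Y}, seqProb Q z ≠ 0 → ∀ a, empDist z a ≠ 0 → Q a ≠ 0 :=
    fun hz a ha h0 => by
      obtain ⟨t, rfl⟩ := exists_eq_of_empDist_ne_zero ha
      exact hz (Finset.prod_eq_zero (Finset.mem_univ t) h0)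
  have hacx := hac (left_ne_zero_of_mul hpos.ne')
  have hacy := hac (right_ne_zero_of_mul hpos.ne')
  have hGJS := mul_le_mul_of_nonneg_left
    (GJS_le_klDivR_add_klDivR hα hTx hTy hQ hacx hacy) (Nat.cast_nonneg (α := ℝ) n)
  have hexcess := mul_le_mul_of_nonneg_right hmn (klDivR_nonneg hTx hQ hacx)
  calc seqProb Q x * seqProb Q y
      ≤ seqProb (empDist x) x * Real.exp (-(m * klDivR (empDist x) Q)) *
          (seqProb (empDist y) y * Real.exp (-(n * klDivR (empDist y) Q))) :=
        mul_le_mul hx hy (hprob hQ y) ((hprob hQ x).trans hx)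
    _ = seqProb (empDist x) x * seqProb (empDist y) y *
          Real.exp (-(m * klDivR (empDist x) Q) + -(n * klDivR (empDist y) Q)) := by
        rw [Real.exp_add, mul_mul_mul_comm]
    _ ≤ _ := by
        gcongr
        · exact mul_nonneg (hprob hTx x) (hprob hTy y)
        · linarith

open Classical in
lemma card_image_empDist_le (Y : Type*) [Fintype Y] [DecidableEq Y] (m : ℕ) :
    (Finset.univ.image (empDist : (Fin m → Y) → Y → ℝ)).card ≤ (m + 1) ^ Fintype.card Y := by
  have hsub : Finset.univ.image (empDist : (Fin m → Y) → Y → ℝ) ⊆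
      (Finset.univ : Finset (Y → Fin (m + 1))).image fun c a => ((c a : ℕ) : ℝ) / m := by
    refine Finset.image_subset_iff.2 fun x _ => Finset.mem_image.2
      ⟨fun a => ⟨(Finset.univ.filter fun i => x i = a).card, Nat.lt_succ_of_le ?_⟩,
        Finset.mem_univ _, rfl⟩
    simpa using Finset.card_filter_le (Finset.univ : Finset (Fin m)) fun i => x i = a
  refine (Finset.card_le_card hsub).trans (Finset.card_image_le.trans_eq ?_)
  simp

lemma sum_seqProb_empDist_le (hm : 0 < m) :
    ∑ x : Fin m → Y, seqProb (empDist x) x ≤ ((m : ℝ) + 1) ^ Fintype.card Y := by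
  classical
  have hclass : ∀ T ∈ Finset.univ.image (empDist : (Fin m → Y) → Y → ℝ),
      ∑ x : Fin m → Y with empDist x = T, seqProb (empDist x) x ≤ 1 := by
    refine Finset.forall_mem_image.2 fun x _ => ?_
    have hT := isDist_piLaw fun _ : Fin m => isDist_empDist hm x
    rw [Finset.sum_congr rfl fun z hz => by rw [(Finset.mem_filter.1 hz).2], ← hT.2]
    exact Finset.sum_le_sum_of_subset_of_nonneg (Finset.filter_subset _ _) fun z _ _ => hT.1 z
  rw [← Finset.sum_fiberwise_of_maps_to (t := Finset.univ.image empDist)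
    fun x _ => Finset.mem_image_of_mem _ (Finset.mem_univ x)]
  refine (Finset.sum_le_card_nsmul _ _ 1 hclass).trans ?_
  rw [nsmul_one]
  exact_mod_cast card_image_empDist_le Y m

end Types

/-! ### The M-ary testing problem -/

section Hypotheses

variable {Y : Type*} {M N n : ℕ}

/-- The law of a training sequence of length `N` drawn from `P1` together with an independent test
sequence of length `n` drawn from `P2`. -/
noncomputable def pairLaw (N n : ℕ) (P1 P2 : Y → ℝ) : (Fin N → Y) × (Fin n → Y) → ℝ :=
  prodLaw (seqProb P1) (seqProb P2)

/-- The joint law of the `M` training sequences, of length `N` each, and of the test sequence of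
length `n` under hypothesis `j`. -/
noncomputable def hypLaw (N n : ℕ) (P : Fin M → Y → ℝ) (j : Fin M) :
    (Fin M → Fin N → Y) × (Fin n → Y) → ℝ :=
  prodLaw (piLaw fun i => seqProb (P i)) (seqProb (P j))

variable [Fintype Y]

lemma isDist_seqProb {P : Y → ℝ} (hP : IsDist P) (m : ℕ) :
    IsDist (seqProb P : (Fin m → Y) → ℝ) :=
  isDist_piLaw fun _ => hP

lemma isDist_pairLaw {P1 P2 : Y → ℝ} (h1 : IsDist P1) (h2 : IsDist P2) :
    IsDist (pairLaw N n P1 P2) :=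
  isDist_prodLaw (isDist_seqProb h1 N) (isDist_seqProb h2 n)

lemma isDist_hypLaw {P : Fin M → Y → ℝ} (hP : ∀ i, IsDist (P i)) (j : Fin M) :
    IsDist (hypLaw N n P j) :=
  isDist_prodLaw (isDist_piLaw fun i => isDist_seqProb (hP i) N) (isDist_seqProb (hP j) n)

lemma prob_hypLaw_apply {P : Fin M → Y → ℝ} (hP : ∀ i, IsDist (P i)) (i j : Fin M)
    (E : (Fin N → Y) × (Fin n → Y) → Prop) :
    prob (hypLaw N n P j) (fun ω => E (ω.1 i, ω.2)) = prob (pairLaw N n (P i) (P j)) E :=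
  prob_prodLaw_piLaw_apply (fun i => isDist_seqProb (hP i) N) (seqProb (P j)) i E

lemma betaM_eq_prob {α : ℝ} (ψ : MTest Y M α n) (P : Fin M → Y → ℝ) (j : Fin M) :
    betaM ψ P j = prob (hypLaw (trainLen α n) n P j)
      fun ω => ψ ω.1 ω.2 ≠ some j ∧ ψ ω.1 ω.2 ≠ none := by
  simp only [betaM, prob, expect, mul_ite, mul_one, mul_zero, Fintype.sum_prod_type]
  rfl

lemma zetaM_eq_prob {α : ℝ} (ψ : MTest Y M α n) (P : Fin M → Y → ℝ) (j : Fin M) :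
    zetaM ψ P j = prob (hypLaw (trainLen α n) n P j) fun ω => ψ ω.1 ω.2 = none := by
  simp only [zetaM, prob, expect, mul_ite, mul_one, mul_zero, Fintype.sum_prod_type]
  rfl

end Hypotheses

/-! ### Gutman's test -/

section Gutman

variable {Y : Type*} [Fintype Y] [DecidableEq Y] {M N n : ℕ} {α : ℝ}

lemma prob_pairLaw_le_GJS_le (hN : 0 < N) (hn : 0 < n) (hα : 0 < α) (hNn : α * n ≤ N)
    {Q : Y → ℝ} (hQ : IsDist Q) (τ : ℝ) :
    prob (pairLaw N n Q Q) (fun ω => τ ≤ GJS (empDist ω.1) (empDist ω.2) α) ≤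
      (((N : ℝ) + 1) * (n + 1)) ^ Fintype.card Y * Real.exp (-(n * τ)) := by
  have hML : ∀ {m : ℕ}, 0 < m → ∀ x : Fin m → Y, 0 ≤ seqProb (empDist x) x := fun hm x =>
    (isDist_seqProb (isDist_empDist hm x) _).1 x
  set R : (Fin N → Y) × (Fin n → Y) → ℝ :=
    prodLaw (fun x => seqProb (empDist x) x) fun y => seqProb (empDist y) y
  have hR : ∀ ω, 0 ≤ R ω := fun ω => mul_nonneg (hML hN ω.1) (hML hn ω.2)
  calc prob (pairLaw N n Q Q) (fun ω => τ ≤ GJS (empDist ω.1) (empDist ω.2) α)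
      ≤ Real.exp (-(n * τ)) * prob R fun ω => τ ≤ GJS (empDist ω.1) (empDist ω.2) α :=
        prob_le_mul_prob fun ω hω => by
          refine (seqProb_mul_seqProb_le_exp_GJS hN hn hα hNn hQ ω.1 ω.2).trans ?_
          rw [mul_comm]
          exact mul_le_mul_of_nonneg_right (by gcongr) (hR ω)
    _ ≤ Real.exp (-(n * τ)) * ∑ ω, R ω := by
        gcongr
        exact prob_le_sum hR _
    _ = (∑ x : Fin N → Y, seqProb (empDist x) x) * (∑ y : Fin n → Y, seqProb (empDist y) y) *
          Real.exp (-(n * τ)) := by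
        rw [mul_comm, Fintype.sum_prod_type, Finset.sum_mul_sum]
        rfl
    _ ≤ _ := by
        rw [mul_pow]
        gcongr
        · exact Finset.sum_nonneg fun y _ => hML hn y
        · exact sum_seqProb_empDist_le hN
        · exact sum_seqProb_empDist_le hn

variable [NeZero M]

lemma betaM_gutmanM_le (hα : 0 < α) (hn : 0 < n) {Q : Fin M → Y → ℝ} (hQ : ∀ i, IsDist (Q i))
    (τ : ℝ) (j : Fin M) :
    betaM (gutmanM M α τ n) Q j ≤
      (((trainLen α n : ℝ) + 1) * (n + 1)) ^ Fintype.card Y * Real.exp (-(n * τ)) := by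
  rw [betaM_eq_prob]
  refine le_trans ?_ (prob_pairLaw_le_GJS_le (Nat.ceil_pos.2 (by positivity)) hn hα
    (Nat.le_ceil _) (hQ j) τ)
  rw [← prob_hypLaw_apply hQ j j]
  refine prob_mono (isDist_hypLaw hQ j) fun ω _ hψ => ?_
  obtain ⟨hne, hsome⟩ := hψ
  by_contra! hlt
  unfold gutmanM at hne hsome
  split_ifs at hne hsome with htwo hone
  · exact hsome rfl
  · refine hne (congrArg some ?_)
    by_contra hij
    exact htwo ⟨_, _, hij, hone.choose_spec, hlt.le⟩
  · exact hone ⟨j, hlt.le⟩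

lemma zetaM_gutmanM_le {P : Fin M → Y → ℝ} (hP : ∀ i, IsDist (P i)) (τ : ℝ) (j : Fin M) :
    zetaM (gutmanM M α τ n) P j ≤ ∑ l ∈ Finset.univ.erase j,
      prob (pairLaw (trainLen α n) n (P l) (P j))
        fun ω => GJS (empDist ω.1) (empDist ω.2) α ≤ τ := by
  rw [zetaM_eq_prob]
  have hHyp := isDist_hypLaw (N := trainLen α n) (n := n) hP j
  have hreject : ∀ (xs : Fin M → Fin (trainLen α n) → Y) y, gutmanM M α τ n xs y = none →
      ∃ l ∈ Finset.univ.erase j, GJS (empDist (xs l)) (empDist y) α ≤ τ := fun xs y hψ => by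
    unfold gutmanM at hψ
    split_ifs at hψ with htwo
    obtain ⟨i, k, hik, hi, hk⟩ := htwo
    by_cases hij : i = j
    · exact ⟨k, Finset.mem_erase.2 ⟨fun hkj => hik (hij.trans hkj.symm), Finset.mem_univ k⟩, hk⟩
    · exact ⟨i, Finset.mem_erase.2 ⟨hij, Finset.mem_univ i⟩, hi⟩
  refine (prob_mono hHyp fun ω _ => hreject ω.1 ω.2).trans
    ((prob_exists_mem_le hHyp _ _).trans_eq (Finset.sum_congr rfl fun l _ => ?_))
  exact prob_hypLaw_apply hP l j fun ω => GJS (empDist ω.1) (empDist ω.2) α ≤ τ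

end Gutman

/-! ### The sum of information densities -/

section InfoSum

variable {Y : Type*} {N n : ℕ} {P1 P2 : Y → ℝ} {α : ℝ}

/-- The sum of the information densities of a training sequence `ω.1` and a test sequence `ω.2`. -/
noncomputable def infoSum (P1 P2 : Y → ℝ) (α : ℝ) (ω : (Fin N → Y) × (Fin n → Y)) : ℝ :=
  ∑ t, iDens1 P1 P2 α (ω.1 t) + ∑ t, iDens2 P1 P2 α (ω.2 t)

variable [Fintype Y]

lemma infoSum_le [DecidableEq Y] (hα : 0 < α) (hN : 0 < N) (hn : 0 < n) (hNn : α * n ≤ N)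
    (hNn' : N ≤ α * n + 1) (h1 : IsDist P1) (h2 : IsDist P2) {ω : (Fin N → Y) × (Fin n → Y)}
    (hω : 0 < pairLaw N n P1 P2 ω) :
    infoSum P1 P2 α ω ≤
      n * GJS (empDist ω.1) (empDist ω.2) α + ∑ x, |iDens1 P1 P2 α x| := by
  obtain ⟨hx, hy⟩ := pos_of_prodLaw_pos (isDist_seqProb h1 N) (isDist_seqProb h2 n) hω
  have hac1 : ∀ a, empDist ω.1 a ≠ 0 → P1 a ≠ 0 := fun a ha => by
    obtain ⟨t, rfl⟩ := exists_eq_of_empDist_ne_zero ha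
    exact (pos_of_piLaw_pos (fun _ => h1) hx t).ne'
  have hac2 : ∀ a, empDist ω.2 a ≠ 0 → P2 a ≠ 0 := fun a ha => by
    obtain ⟨t, rfl⟩ := exists_eq_of_empDist_ne_zero ha
    exact (pos_of_piLaw_pos (fun _ => h2) hy t).ne'
  have hT1 := isDist_empDist hN ω.1
  have hmean := (abs_le.1 <| abs_expect_le hT1 fun x => Finset.single_le_sum
    (f := fun x => |iDens1 P1 P2 α x|) (fun _ _ => abs_nonneg _) (Finset.mem_univ x)).2
  have hGJS := expect_iDens_le_GJS hα hT1 (isDist_empDist hn ω.2) h1 h2 hac1 hac2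
  have hsum : 0 ≤ ∑ x, |iDens1 P1 P2 α x| := Finset.sum_nonneg fun _ _ => abs_nonneg _
  calc infoSum P1 P2 α ω
      = n * (α * expect (empDist ω.1) (iDens1 P1 P2 α) +
          expect (empDist ω.2) (iDens2 P1 P2 α)) +
          (N - α * n) * expect (empDist ω.1) (iDens1 P1 P2 α) := by
        rw [infoSum, sum_comp_eq_mul_expect_empDist, sum_comp_eq_mul_expect_empDist]
        ring
    _ ≤ n * GJS (empDist ω.1) (empDist ω.2) α + 1 * ∑ x, |iDens1 P1 P2 α x| :=
        add_le_add (by gcongr) <| (mul_le_mul_of_nonneg_left hmean (sub_nonneg.2 hNn)).trans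
          (mul_le_mul_of_nonneg_right (by linarith) hsum)
    _ = _ := by rw [one_mul]

lemma expect_pairLaw_comp_infoSum (P1 P2 : Y → ℝ) (α : ℝ) (F : ℝ → ℝ) :
    expect (pairLaw N n P1 P2) (fun ω => F (infoSum P1 P2 α ω)) =
      expect (piLaw (Sum.elim (fun _ : Fin N => P1) fun _ : Fin n => P2)) fun x =>
        F (∑ k, (Sum.elim (fun _ => iDens1 P1 P2 α) fun _ => iDens2 P1 P2 α :
          Fin N ⊕ Fin n → Y → ℝ) k (x k)) := by
  simp only [Fintype.sum_sum_type]
  exact expect_prodLaw_piLaw (fun _ => P1) (fun _ => P2) fun ω => F (infoSum P1 P2 α ω)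

lemma isDist_sumElim (h1 : IsDist P1) (h2 : IsDist P2) (k : Fin N ⊕ Fin n) :
    IsDist (Sum.elim (fun _ => P1) (fun _ => P2) k) :=
  Sum.rec (fun _ => h1) (fun _ => h2) k

lemma expect_infoSum (h1 : IsDist P1) (h2 : IsDist P2) (α : ℝ) :
    expect (pairLaw N n P1 P2) (infoSum P1 P2 α) =
      N * expect P1 (iDens1 P1 P2 α) + n * expect P2 (iDens2 P1 P2 α) :=
  (expect_pairLaw_comp_infoSum P1 P2 α id).trans
    ((expect_piLaw_sum (isDist_sumElim h1 h2) _).trans (by simp))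

lemma varD_infoSum (h1 : IsDist P1) (h2 : IsDist P2) (α : ℝ) :
    varD (pairLaw N n P1 P2) (infoSum P1 P2 α) =
      N * varD P1 (iDens1 P1 P2 α) + n * varD P2 (iDens2 P1 P2 α) := by
  rw [varD, expect_pairLaw_comp_infoSum P1 P2 α fun t => (t - _) ^ 2]
  have hmean := expect_pairLaw_comp_infoSum (N := N) (n := n) P1 P2 α id
  simp only [id_eq] at hmean
  rw [hmean]
  exact (varD_piLaw_sum (isDist_sumElim h1 h2) _).trans (by simp)

theorem berryEsseen_infoSum (h1 : IsDist P1) (h2 : IsDist P2) {B : ℝ} (hB : 0 < B)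
    (hB1 : ∀ x, |iDens1 P1 P2 α x| ≤ B) (hB2 : ∀ x, |iDens2 P1 P2 α x| ≤ B)
    (hvar : 0 < varD (pairLaw N n P1 P2) (infoSum P1 P2 α)) (r : ℝ) :
    |prob (pairLaw N n P1 P2) (fun ω => infoSum P1 P2 α ω ≤
        expect (pairLaw N n P1 P2) (infoSum P1 P2 α) +
          √(varD (pairLaw N n P1 P2) (infoSum P1 P2 α)) * r) - stdCDF r| ≤
      17 * (2 * B / √(varD (pairLaw N n P1 P2) (infoSum P1 P2 α))) := by
  set μ := expect (pairLaw N n P1 P2) (infoSum P1 P2 α) with hμ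
  set σ2 := varD (pairLaw N n P1 P2) (infoSum P1 P2 α) with hσ2
  have hcentred : ∀ {Q f : Y → ℝ}, IsDist Q → (∀ x, |f x| ≤ B) → ∀ x, |f x - expect Q f| ≤ 2 * B :=
    fun hQ hf x => (abs_sub _ _).trans (by linarith [hf x, abs_expect_le hQ hf])
  refine le_of_eq_of_le (congrArg (fun p => |p - stdCDF r|) <|
    expect_pairLaw_comp_infoSum P1 P2 α fun t => if t ≤ μ + √σ2 * r then 1 else 0) ?_
  refine berryEsseen (isDist_sumElim h1 h2) ?_ ?_ (Real.sqrt_pos.2 hvar) (by positivity) ?_ r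
  · simp [hμ, expect_infoSum h1 h2]
  · rw [Real.sq_sqrt hvar.le]
    simp [hσ2, varD_infoSum h1 h2]
  · rintro (k | k)
    · exact hcentred h1 hB1
    · exact hcentred h2 hB2

end InfoSum

/-! ### Second-order asymptotics of the sum of information densities -/

section Asymptotics

lemma eventually_le_sqrt_natCast (R : ℝ) : ∀ᶠ n : ℕ in atTop, R ≤ √(n : ℝ) :=
  (Real.tendsto_sqrt_atTop.comp tendsto_natCast_atTop_atTop).eventually_ge_atTop R

lemma eventually_mul_add_sqrt_mul_add_le {G G' : ℝ} (h : G < G') (B C : ℝ) :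
    ∀ᶠ n : ℕ in atTop, n * G + √n * B + C ≤ n * G' := by
  filter_upwards [eventually_le_sqrt_natCast 1,
    eventually_le_sqrt_natCast ((|B| + |C|) / (G' - G))] with n hone hn
  rw [div_le_iff₀ (sub_pos.2 h)] at hn
  calc n * G + √n * B + C
      ≤ n * G + √n * |B| + √n * |C| := by
        gcongr
        · exact le_abs_self B
        · exact (le_abs_self C).trans (le_mul_of_one_le_left (abs_nonneg C) hone)
    _ = n * G + √n * (|B| + |C|) := by ring
    _ ≤ n * G + √n * (√n * (G' - G)) := by gcongr
    _ = n * G' := by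
        rw [← mul_assoc, Real.mul_self_sqrt n.cast_nonneg]
        ring

lemma sqrt_add_le_sqrt_add_sqrt (a : ℝ) {b : ℝ} (hb : 0 ≤ b) : √(a + b) ≤ √a + √b := by
  refine Real.sqrt_le_iff.2 ⟨by positivity, ?_⟩
  nlinarith [Real.sq_sqrt' (x := a), le_max_left a 0, Real.sq_sqrt hb,
    Real.sqrt_nonneg a, Real.sqrt_nonneg b]

lemma exists_stdCDF_shift (b L : ℝ) : ∃ A, ∀ᶠ n : ℕ in atTop,
    stdCDF (b - A / √n) ≤ stdCDF b - L / √n ∧ stdCDF b + L / √n ≤ stdCDF (b + A / √n) := by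
  obtain ⟨c, hc, hslope⟩ := exists_mul_sub_le_stdCDF_sub b
  refine ⟨|L| / c, ?_⟩
  filter_upwards [eventually_le_sqrt_natCast 1, eventually_le_sqrt_natCast (|L| / c)]
    with n hone hn
  have hpos : 0 < √(n : ℝ) := zero_lt_one.trans_le hone
  have hA : |L| / c / √n ≤ 1 := (div_le_one hpos).2 hn
  have hA0 : 0 ≤ |L| / c / √n := by positivity
  have hL : L / √n ≤ c * (|L| / c / √n) := by
    rw [div_right_comm, mul_div_cancel₀ _ hc.ne']
    gcongr
    exact le_abs_self L
  have hleft := hslope (b - |L| / c / √n) b (by linarith) (by linarith) (by linarith)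
  have hright := hslope b (b + |L| / c / √n) (by linarith) (by linarith) (by linarith)
  rw [sub_sub_cancel] at hleft
  rw [add_sub_cancel_left] at hright
  exact ⟨by linarith, by linarith⟩

lemma exists_quantile_bounds {F : ℕ → ℝ → ℝ} {μ s : ℕ → ℝ} {G σ K D : ℝ}
    (hF : ∀ n, Monotone (F n)) (hμ : ∀ n : ℕ, |μ n - n * G| ≤ K)
    (hs : ∀ n : ℕ, |s n - √n * σ| ≤ K)
    (hnormal : ∀ᶠ n : ℕ in atTop, ∀ r, |F n (μ n + s n * r) - stdCDF r| ≤ D / √n) (b L : ℝ) :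
    ∃ C, ∀ᶠ n : ℕ in atTop, F n (n * G + √n * (σ * b) - C) ≤ stdCDF b - L / √n ∧
      stdCDF b + L / √n ≤ F n (n * G + √n * (σ * b) + C) := by
  obtain ⟨A, hA⟩ := exists_stdCDF_shift b (L + D)
  refine ⟨K + K * |b| + (|σ| + K) * |A|, ?_⟩
  filter_upwards [hA, hnormal, eventually_le_sqrt_natCast 1] with n hshift hnormal hone
  have hpos : 0 < √(n : ℝ) := zero_lt_one.trans_le hone
  have hK : 0 ≤ K := (abs_nonneg _).trans (hμ n)
  have hcentre := abs_le.1 (hμ n)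
  have hscale : |(s n - √n * σ) * b| ≤ K * |b| := by
    rw [abs_mul]
    gcongr
    exact hs n
  have hdrift : |s n * (A / √n)| ≤ (|σ| + K) * |A| := by
    have hsn : |s n| ≤ √n * (|σ| + K) := by
      have htri := abs_add_le (√n * σ) (s n - √n * σ)
      rw [add_sub_cancel, abs_mul, abs_of_pos hpos] at htri
      nlinarith [hs n, le_mul_of_one_le_left hK hone]
    rw [mul_div_assoc', abs_div, abs_mul, abs_of_pos hpos, div_le_iff₀ hpos]
    nlinarith [mul_le_mul_of_nonneg_right hsn (abs_nonneg A)]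
  have hscale := abs_le.1 hscale
  have hdrift := abs_le.1 hdrift
  rw [add_div] at hshift
  constructor
  · have hmono := hF n (show n * G + √n * (σ * b) - (K + K * |b| + (|σ| + K) * |A|) ≤
      μ n + s n * (b - A / √n) by linear_combination hcentre.1 + hscale.1 + hdrift.2)
    linarith [abs_le.1 (hnormal (b - A / √n))]
  · have hmono := hF n (show μ n + s n * (b + A / √n) ≤
      n * G + √n * (σ * b) + (K + K * |b| + (|σ| + K) * |A|) by
        linear_combination hcentre.2 + hscale.2 + hdrift.2)
    linarith [abs_le.1 (hnormal (b + A / √n))]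

end Asymptotics

lemma exists_iDens_bound {Y : Type*} [Finite Y] (P1 P2 : Y → ℝ) (α : ℝ) :
    ∃ B > 0, ∀ x, |iDens1 P1 P2 α x| ≤ B ∧ |iDens2 P1 P2 α x| ≤ B := by
  obtain ⟨B, hB⟩ := (Set.finite_range fun x => max |iDens1 P1 P2 α x| |iDens2 P1 P2 α x|).bddAbove
  exact ⟨max B 1, by positivity, fun x =>
    max_le_iff.1 ((hB ⟨x, rfl⟩).trans (le_max_left _ _))⟩

section InfoSumAsymptotics

variable {Y : Type*} [Fintype Y] {P1 P2 : Y → ℝ} {α : ℝ}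

/-- The distribution function of the sum of information densities of `P1` and `P2`, for a training
sequence of length `trainLen α n` and a test sequence of length `n`. -/
noncomputable def infoCDF (P1 P2 : Y → ℝ) (α : ℝ) (n : ℕ) (t : ℝ) : ℝ :=
  prob (pairLaw (trainLen α n) n P1 P2) fun ω => infoSum P1 P2 α ω ≤ t

lemma monotone_infoCDF (h1 : IsDist P1) (h2 : IsDist P2) (n : ℕ) :
    Monotone (infoCDF P1 P2 α n) :=
  fun _ _ hst => prob_mono (isDist_pairLaw h1 h2) fun _ _ hω => hω.trans hst

lemma mul_le_trainLen (α : ℝ) (n : ℕ) : α * n ≤ trainLen α n := Nat.le_ceil _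

lemma trainLen_le (hα : 0 < α) (n : ℕ) : trainLen α n ≤ α * n + 1 :=
  (Nat.ceil_lt_add_one (by positivity)).le

lemma abs_expect_infoSum_sub_le (hα : 0 < α) (h1 : IsDist P1) (h2 : IsDist P2) (n : ℕ) :
    |expect (pairLaw (trainLen α n) n P1 P2) (infoSum P1 P2 α) - n * GJS P1 P2 α| ≤
      |expect P1 (iDens1 P1 P2 α)| := by
  rw [expect_infoSum h1 h2, GJS_eq_expect,
    show (trainLen α n * expect P1 (iDens1 P1 P2 α) + n * expect P2 (iDens2 P1 P2 α) -
        n * (α * expect P1 (iDens1 P1 P2 α) + expect P2 (iDens2 P1 P2 α)) : ℝ) =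
      (trainLen α n - α * n) * expect P1 (iDens1 P1 P2 α) by ring, abs_mul,
    abs_of_nonneg (sub_nonneg.2 (mul_le_trainLen α n))]
  exact mul_le_of_le_one_left (abs_nonneg _) (by linarith [trainLen_le hα n])

lemma mul_disp_le_varD_infoSum (h1 : IsDist P1) (h2 : IsDist P2) (n : ℕ) :
    n * disp P1 P2 α ≤ varD (pairLaw (trainLen α n) n P1 P2) (infoSum P1 P2 α) := by
  rw [varD_infoSum h1 h2, disp]
  nlinarith [mul_le_mul_of_nonneg_right (mul_le_trainLen α n) (varD_nonneg h1 (iDens1 P1 P2 α))]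

lemma varD_infoSum_le (hα : 0 < α) (h1 : IsDist P1) (h2 : IsDist P2) (n : ℕ) :
    varD (pairLaw (trainLen α n) n P1 P2) (infoSum P1 P2 α) ≤
      n * disp P1 P2 α + varD P1 (iDens1 P1 P2 α) := by
  rw [varD_infoSum h1 h2, disp]
  nlinarith [mul_le_mul_of_nonneg_right (trainLen_le hα n) (varD_nonneg h1 (iDens1 P1 P2 α))]

lemma abs_sqrt_varD_infoSum_sub_le (hα : 0 < α) (h1 : IsDist P1) (h2 : IsDist P2) (n : ℕ) :
    |√(varD (pairLaw (trainLen α n) n P1 P2) (infoSum P1 P2 α)) - √n * √(disp P1 P2 α)| ≤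
      √(varD P1 (iDens1 P1 P2 α)) := by
  rw [← Real.sqrt_mul n.cast_nonneg, abs_of_nonneg
    (sub_nonneg.2 (Real.sqrt_le_sqrt (mul_disp_le_varD_infoSum h1 h2 n))), sub_le_iff_le_add']
  exact (Real.sqrt_le_sqrt (varD_infoSum_le hα h1 h2 n)).trans
    (sqrt_add_le_sqrt_add_sqrt _ (varD_nonneg h1 _))

theorem exists_infoCDF_quantile_bounds (hα : 0 < α) (h1 : IsDist P1) (h2 : IsDist P2)
    (hV : 0 < disp P1 P2 α) (b L : ℝ) :
    ∃ C, ∀ᶠ n : ℕ in atTop,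
      infoCDF P1 P2 α n (n * GJS P1 P2 α + √n * (√(disp P1 P2 α) * b) - C) ≤
        stdCDF b - L / √n ∧
      stdCDF b + L / √n ≤
        infoCDF P1 P2 α n (n * GJS P1 P2 α + √n * (√(disp P1 P2 α) * b) + C) := by
  obtain ⟨B, hB, hbound⟩ := exists_iDens_bound P1 P2 α
  refine exists_quantile_bounds (D := 17 * (2 * B / √(disp P1 P2 α)))
    (K := max |expect P1 (iDens1 P1 P2 α)| √(varD P1 (iDens1 P1 P2 α)))
    (monotone_infoCDF h1 h2)
    (fun n => (abs_expect_infoSum_sub_le hα h1 h2 n).trans (le_max_left _ _))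
    (fun n => (abs_sqrt_varD_infoSum_sub_le hα h1 h2 n).trans (le_max_right _ _)) ?_ b L
  filter_upwards [eventually_gt_atTop 0] with n hn r
  have hvar := mul_disp_le_varD_infoSum (α := α) h1 h2 n
  have hnV : 0 < n * disp P1 P2 α := by positivity
  refine (berryEsseen_infoSum h1 h2 hB (fun x => (hbound x).1) (fun x => (hbound x).2)
    (hnV.trans_le hvar) r).trans ?_
  rw [mul_div_assoc 17, div_div, ← Real.sqrt_mul hV.le, mul_comm (disp P1 P2 α)]
  gcongr

lemma eventually_infoCDF_le (hα : 0 < α) (h1 : IsDist P1) (h2 : IsDist P2) {g c : ℝ}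
    (hg : g < GJS P1 P2 α) (hc : 0 < c) :
    ∀ᶠ n : ℕ in atTop, infoCDF P1 P2 α n (n * g) ≤ c / √n := by
  obtain ⟨δ, hδ, hδG⟩ : ∃ δ > 0, g + δ < GJS P1 P2 α :=
    ⟨(GJS P1 P2 α - g) / 2, by linarith, by linarith⟩
  set W := disp P1 P2 α + varD P1 (iDens1 P1 P2 α)
  filter_upwards [eventually_ge_atTop 1, eventually_le_sqrt_natCast (W / δ ^ 2 / c),
    eventually_mul_add_sqrt_mul_add_le hδG 0 |expect P1 (iDens1 P1 P2 α)|] with n hn hW hgap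
  have hn : (1 : ℝ) ≤ n := Nat.one_le_cast.2 hn
  have hmean := abs_le.1 (abs_expect_infoSum_sub_le hα h1 h2 n)
  have hvar := varD_infoSum_le hα h1 h2 n
  have hvar1 := varD_nonneg h1 (iDens1 P1 P2 α)
  calc infoCDF P1 P2 α n (n * g)
      ≤ prob (pairLaw (trainLen α n) n P1 P2) fun ω => infoSum P1 P2 α ω ≤
          expect (pairLaw (trainLen α n) n P1 P2) (infoSum P1 P2 α) - n * δ :=
        monotone_infoCDF h1 h2 n (by linarith)
    _ ≤ varD (pairLaw (trainLen α n) n P1 P2) (infoSum P1 P2 α) / (n * δ) ^ 2 :=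
        prob_le_expect_sub_le (isDist_pairLaw h1 h2) _ (by positivity)
    _ ≤ n * W / (n * δ) ^ 2 := by
        gcongr
        nlinarith
    _ = W / δ ^ 2 / c * (c / n) := by field_simp
    _ ≤ √n * (c / n) := by gcongr
    _ = c / √n := by
        rw [mul_div_left_comm, Real.sqrt_div_self', mul_one_div]

end InfoSumAsymptotics

/-! ### The converse bound -/

section Converse

variable {Y : Type*} [Fintype Y] {M : ℕ} {α : ℝ}

lemma le_mul_exp_log_div {p q : ℝ} (hp : 0 ≤ p) (hq : 0 ≤ q) (hpq : p ≠ 0 → q ≠ 0) :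
    p ≤ q * Real.exp (Real.log (p / q)) := by
  obtain rfl | hp0 := hp.eq_or_lt
  · positivity
  · have hq0 := hq.lt_of_ne' (hpq hp0.ne')
    rw [Real.exp_log (div_pos hp0 hq0), mul_div_cancel₀ _ hq0.ne']

lemma le_mix_mul_exp_iDens1 {P1 P2 : Y → ℝ} (hα : 0 < α) (h1 : IsDist P1) (h2 : IsDist P2)
    (x : Y) : P1 x ≤ mix P1 P2 α x * Real.exp (iDens1 P1 P2 α x) :=
  iDens1_eq_log_div_mix P1 P2 α x ▸ le_mul_exp_log_div (h1.1 x) ((isDist_mix hα h1 h2).1 x)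
    fun hx => (mix_pos_of_left hα h1 h2 hx).ne'

lemma le_mix_mul_exp_iDens2 {P1 P2 : Y → ℝ} (hα : 0 < α) (h1 : IsDist P1) (h2 : IsDist P2)
    (x : Y) : P2 x ≤ mix P1 P2 α x * Real.exp (iDens2 P1 P2 α x) :=
  iDens2_eq_log_div_mix P1 P2 α x ▸ le_mul_exp_log_div (h2.1 x) ((isDist_mix hα h1 h2).1 x)
    fun hx => (mix_pos_of_right hα h1 h2 hx).ne'

/-- The tuple `P` with `P i` replaced by the mixture of `P i` and `P j`: the law under `H_i` of the
`i`-th training sequence and the test sequence is then a worst alternative to their law under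
`H_j`. -/
noncomputable def mixAt (P : Fin M → Y → ℝ) (α : ℝ) (i j : Fin M) : Fin M → Y → ℝ :=
  Function.update P i (mix (P i) (P j) α)

lemma isDist_mixAt {P : Fin M → Y → ℝ} (hα : 0 < α) (hP : ∀ i, IsDist (P i)) (i j k : Fin M) :
    IsDist (mixAt P α i j k) := by
  obtain rfl | hk := eq_or_ne k i
  · rw [mixAt, Function.update_self]
    exact isDist_mix hα (hP k) (hP j)
  · rw [mixAt, Function.update_of_ne hk]
    exact hP k

lemma hypLaw_le_hypLaw_mixAt {N n : ℕ} {P : Fin M → Y → ℝ} (hα : 0 < α) (hP : ∀ i, IsDist (P i))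
    (i j : Fin M) (ω : (Fin M → Fin N → Y) × (Fin n → Y)) :
    hypLaw N n P j ω ≤
      hypLaw N n (mixAt P α i j) i ω * Real.exp (infoSum (P i) (P j) α (ω.1 i, ω.2)) := by
  have hpos : ∀ {R : Y → ℝ} {m : ℕ} (x : Fin m → Y), IsDist R → 0 ≤ seqProb R x :=
    fun x hR => (isDist_seqProb hR _).1 x
  have htrain := seqProb_le_seqProb_mul_exp (hP i).1 (x := ω.1 i)
    fun t => le_mix_mul_exp_iDens1 hα (hP i) (hP j) (ω.1 i t)
  have htest := seqProb_le_seqProb_mul_exp (hP j).1 (x := ω.2)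
    fun t => le_mix_mul_exp_iDens2 hα (hP i) (hP j) (ω.2 t)
  have hmix := isDist_mix hα (hP i) (hP j)
  have hrest : ∏ k ∈ Finset.univ.erase i, seqProb (mixAt P α i j k) (ω.1 k) =
      ∏ k ∈ Finset.univ.erase i, seqProb (P k) (ω.1 k) :=
    Finset.prod_congr rfl fun k hk => by
      rw [mixAt, Function.update_of_ne (Finset.ne_of_mem_erase hk)]
  have hrest0 : 0 ≤ ∏ k ∈ Finset.univ.erase i, seqProb (P k) (ω.1 k) :=
    Finset.prod_nonneg fun k _ => hpos _ (hP k)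
  simp only [hypLaw, prodLaw, piLaw, infoSum, Real.exp_add]
  rw [← Finset.mul_prod_erase _ _ (Finset.mem_univ i),
    ← Finset.mul_prod_erase _ _ (Finset.mem_univ i), hrest, mixAt, Function.update_self]
  calc seqProb (P i) (ω.1 i) * (∏ k ∈ Finset.univ.erase i, seqProb (P k) (ω.1 k)) *
        seqProb (P j) ω.2
      ≤ seqProb (mix (P i) (P j) α) (ω.1 i) *
            Real.exp (∑ t, iDens1 (P i) (P j) α (ω.1 i t)) *
          (∏ k ∈ Finset.univ.erase i, seqProb (P k) (ω.1 k)) *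
          (seqProb (mix (P i) (P j) α) ω.2 * Real.exp (∑ t, iDens2 (P i) (P j) α (ω.2 t))) := by
        have := hpos (ω.1 i) hmix
        have := hpos ω.2 (hP j)
        gcongr
    _ = _ := by ring

lemma prob_hypLaw_and_infoSum_le {N n : ℕ} {P : Fin M → Y → ℝ} (hα : 0 < α)
    (hP : ∀ i, IsDist (P i)) (i j : Fin M) (γ : ℝ)
    (E : (Fin M → Fin N → Y) × (Fin n → Y) → Prop) :
    prob (hypLaw N n P j) (fun ω => E ω ∧ infoSum (P i) (P j) α (ω.1 i, ω.2) ≤ γ) ≤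
      Real.exp γ * prob (hypLaw N n (mixAt P α i j) i) E := by
  have hmix := isDist_hypLaw (N := N) (n := n) (isDist_mixAt hα hP i j) i
  refine le_trans (prob_le_mul_prob fun ω hω => ?_)
    (mul_le_mul_of_nonneg_left (prob_mono hmix fun ω _ hω => hω.1) (Real.exp_pos γ).le)
  refine (hypLaw_le_hypLaw_mixAt hα hP i j ω).trans ?_
  rw [mul_comm]
  exact mul_le_mul_of_nonneg_right (Real.exp_le_exp.2 hω.2) (hmix.1 ω)

lemma infoCDF_le_zetaM_add {n : ℕ} {P : Fin M → Y → ℝ} (hα : 0 < α) (hP : ∀ i, IsDist (P i))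
    {i j : Fin M} (hij : i ≠ j) (ψ : MTest Y M α n) (γ : ℝ) :
    infoCDF (P i) (P j) α n γ ≤
      zetaM ψ P j + (betaM ψ P j + Real.exp γ * betaM ψ (mixAt P α i j) i) := by
  have hHyp := isDist_hypLaw (N := trainLen α n) (n := n) hP j
  have haccept : prob (hypLaw (trainLen α n) n P j)
      (fun ω => ψ ω.1 ω.2 = some j ∧ infoSum (P i) (P j) α (ω.1 i, ω.2) ≤ γ) ≤
      Real.exp γ * betaM ψ (mixAt P α i j) i := by
    refine (prob_hypLaw_and_infoSum_le hα hP i j γ _).trans ?_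
    rw [betaM_eq_prob]
    gcongr
    exact prob_mono (isDist_hypLaw (isDist_mixAt hα hP i j) i) fun ω _ hω => by
      simp [hω, hij.symm]
  rw [infoCDF, ← prob_hypLaw_apply hP i j, zetaM_eq_prob, betaM_eq_prob ψ P j]
  calc prob (hypLaw (trainLen α n) n P j) (fun ω => infoSum (P i) (P j) α (ω.1 i, ω.2) ≤ γ)
      ≤ prob (hypLaw (trainLen α n) n P j) fun ω => ψ ω.1 ω.2 = none ∨
          (ψ ω.1 ω.2 ≠ some j ∧ ψ ω.1 ω.2 ≠ none) ∨
          ψ ω.1 ω.2 = some j ∧ infoSum (P i) (P j) α (ω.1 i, ω.2) ≤ γ :=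
        prob_mono hHyp fun ω _ hω => by tauto
    _ ≤ _ := (prob_or_le hHyp _ _).trans <| by
        gcongr
        exact (prob_or_le hHyp _ _).trans (by gcongr)

end Converse

/-! ### Second-order asymptotics of the optimal exponent -/

section SecondOrder

variable {Y : Type*} [Fintype Y] {M : ℕ} {α : ℝ} {P : Fin M → Y → ℝ} {ε : Fin M → ℝ}

/-- `n` times the second-order expansion `G + √(V / n) Φ⁻¹(e)` of the optimal exponent, where `G`
and `V` are the generalized Jensen–Shannon divergence and the dispersion of `P1` and `P2`. -/
noncomputable def secondOrder (P1 P2 : Y → ℝ) (α e : ℝ) (n : ℕ) : ℝ :=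
  n * GJS P1 P2 α + √n * (√(disp P1 P2 α) * stdCDFInv e)

lemma secondOrder_div_natCast (P1 P2 : Y → ℝ) (hV : 0 ≤ disp P1 P2 α) (e : ℝ) {n : ℕ}
    (hn : n ≠ 0) :
    secondOrder P1 P2 α e n / n = GJS P1 P2 α + √(disp P1 P2 α / n) * stdCDFInv e := by
  have hn0 : (n : ℝ) ≠ 0 := Nat.cast_ne_zero.2 hn
  rw [secondOrder, add_div, mul_div_cancel_left₀ _ hn0, mul_div_right_comm, Real.sqrt_div_self',
    Real.sqrt_div hV]
  ring

lemma eventually_secondOrder_le {P1 P2 Q1 Q2 : Y → ℝ} {e e' : ℝ}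
    (hle : GJS P1 P2 α ≤ GJS Q1 Q2 α)
    (hle_of_eq : GJS Q1 Q2 α = GJS P1 P2 α →
      √(disp P1 P2 α) * stdCDFInv e ≤ √(disp Q1 Q2 α) * stdCDFInv e') :
    ∀ᶠ n : ℕ in atTop, secondOrder P1 P2 α e n ≤ secondOrder Q1 Q2 α e' n := by
  simp only [secondOrder]
  obtain heq | hlt := hle.eq_or_lt
  · filter_upwards with n
    rw [heq]
    have hle := hle_of_eq heq.symm
    gcongr
  · filter_upwards [eventually_mul_add_sqrt_mul_add_le hlt
      (√(disp P1 P2 α) * stdCDFInv e - √(disp Q1 Q2 α) * stdCDFInv e') 0] with n hn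
    linarith

/-- The achievable error exponents, of which `lamStarM M α n ε P` is the supremum. -/
def achievableExponents (α : ℝ) (n : ℕ) (ε : Fin M → ℝ) (P : Fin M → Y → ℝ) : Set ℝ :=
  {lam : ℝ | 0 ≤ lam ∧ ∃ ψ : MTest Y M α n,
    (∀ Q : Fin M → Y → ℝ, (∀ i, IsDist (Q i)) → ∀ j,
      betaM ψ Q j ≤ Real.exp (-((n : ℝ) * lam))) ∧
    (∀ j, zetaM ψ P j ≤ ε j)}

lemma eventually_one_le_log_natCast : ∀ᶠ n : ℕ in atTop, 1 ≤ Real.log n :=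
  (Real.tendsto_log_atTop.comp tendsto_natCast_atTop_atTop).eventually_ge_atTop 1

lemma exp_neg_le_one_div_of_log_le {x y : ℝ} (hx : 0 < x) (h : Real.log x ≤ y) :
    Real.exp (-y) ≤ 1 / x := by
  rw [one_div, ← Real.exp_log (inv_pos.2 hx), Real.log_inv]
  exact Real.exp_le_exp.2 (neg_le_neg h)

theorem exists_mul_le_secondOrder_add (hα : 0 < α) (hP : ∀ i, IsDist (P i)) {i j : Fin M}
    (hne : P i ≠ P j) (hV : 0 < disp (P i) (P j) α) (hε : ε j ∈ Set.Ioo 0 1) :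
    ∃ C, ∀ᶠ n : ℕ in atTop, ∀ lam ∈ achievableExponents α n ε P,
      n * lam ≤ secondOrder (P i) (P j) α (ε j) n + C * Real.log n := by
  obtain ⟨C, hC⟩ := exists_infoCDF_quantile_bounds hα (hP i) (hP j) hV (stdCDFInv (ε j)) 3
  refine ⟨|C| + 1, ?_⟩
  filter_upwards [hC, eventually_one_le_log_natCast, eventually_ge_atTop 1,
    eventually_mul_add_sqrt_mul_add_le (GJS_pos hα (hP i) (hP j) hne)
      (-(√(disp (P i) (P j) α) * stdCDFInv (ε j))) (-C)] with n hquantile hlog hn hγ lam hlam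
  rw [stdCDF_stdCDFInv hε] at hquantile
  set γ := n * GJS (P i) (P j) α + √n * (√(disp (P i) (P j) α) * stdCDFInv (ε j)) + C
  by_contra! hlt
  have hγ0 : 0 ≤ γ := by linarith
  have hγlam : γ + Real.log n ≤ n * lam := by
    rw [secondOrder] at hlt
    linarith [le_abs_self C, le_mul_of_one_le_right (abs_nonneg C) hlog]
  have hn : (1 : ℝ) ≤ n := Nat.one_le_cast.2 hn
  have hn0 : (0 : ℝ) < n := one_pos.trans_le hn
  obtain ⟨-, ψ, hβ, hζ⟩ := hlam
  have hβj : betaM ψ P j ≤ 1 / n :=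
    (hβ P hP j).trans (exp_neg_le_one_div_of_log_le hn0 (by linarith))
  have hβi : Real.exp γ * betaM ψ (mixAt P α i j) i ≤ 1 / n :=
    (mul_le_mul_of_nonneg_left (hβ _ (isDist_mixAt hα hP i j) i) (Real.exp_pos γ).le).trans <| by
      rw [← Real.exp_add, ← neg_neg γ, ← neg_add]
      exact exp_neg_le_one_div_of_log_le hn0 (by linarith)
  have hsqrt : 1 / (n : ℝ) ≤ 1 / √n :=
    one_div_le_one_div_of_le (Real.sqrt_pos.2 hn0) (Real.sqrt_le_self_iff.2 (.inr hn))
  have hsqrt0 : 0 < 1 / √(n : ℝ) := one_div_pos.2 (Real.sqrt_pos.2 hn0)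
  have hcdf := infoCDF_le_zetaM_add hα hP (fun hij => hne (congrArg P hij)) ψ γ
  have h3 : 3 / √(n : ℝ) = 3 * (1 / √n) := by ring
  linarith [hquantile.2, hζ j]

lemma zero_mem_achievableExponents (hε : ∀ j, 0 ≤ ε j) (i : Fin M) (n : ℕ) :
    0 ∈ achievableExponents α n ε P := by
  refine ⟨le_rfl, fun _ _ => some i, fun Q hQ j => ?_, fun j => ?_⟩
  · rw [betaM_eq_prob, mul_zero, neg_zero, Real.exp_zero]
    exact prob_le_one (isDist_hypLaw hQ j) _
  · simpa [zetaM] using hε j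

lemma eventually_infoCDF_secondOrder_sub_le (hα : 0 < α) {P1 P2 Q1 Q2 : Y → ℝ} (h1 : IsDist P1)
    (h2 : IsDist P2) (hlt : GJS Q1 Q2 α < GJS P1 P2 α) (e C : ℝ) :
    ∀ᶠ n : ℕ in atTop, infoCDF P1 P2 α n (secondOrder Q1 Q2 α e n - C) ≤ 1 / √n := by
  obtain ⟨g, hg, hgP⟩ := exists_between hlt
  filter_upwards [eventually_infoCDF_le hα h1 h2 hgP one_pos,
    eventually_mul_add_sqrt_mul_add_le hg (√(disp Q1 Q2 α) * stdCDFInv e) (-C)] with n hcdf hgap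
  exact (monotone_infoCDF h1 h2 n (by rwa [secondOrder, sub_eq_add_neg])).trans hcdf

end SecondOrder

section Achievability

variable {Y : Type*} [Fintype Y] [DecidableEq Y] {M : ℕ} [NeZero M] {α : ℝ} {P : Fin M → Y → ℝ}
  {ε : Fin M → ℝ}

lemma prob_GJS_le_le_infoCDF {n : ℕ} {P1 P2 : Y → ℝ} (hα : 0 < α) (h1 : IsDist P1)
    (h2 : IsDist P2) (hn : 0 < n) (τ : ℝ) :
    prob (pairLaw (trainLen α n) n P1 P2) (fun ω => GJS (empDist ω.1) (empDist ω.2) α ≤ τ) ≤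
      infoCDF P1 P2 α n (n * τ + ∑ x, |iDens1 P1 P2 α x|) :=
  prob_mono (isDist_pairLaw h1 h2) fun _ hω hle =>
    (infoSum_le hα (Nat.ceil_pos.2 (by positivity)) hn (mul_le_trainLen α n) (trainLen_le hα n)
      h1 h2 hω).trans (by gcongr; exact hle)

/-- Only the closest competitor `i` of `k` contributes to the rejection probability of Gutman's test
to first order; the remaining ones are absorbed by the `O(1 / √n)` margin on its quantile. -/
lemma exists_zetaM_gutmanM_le (hα : 0 < α) (hP : ∀ i, IsDist (P i)) {i k : Fin M} (hik : i ≠ k)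
    (hmin : ∀ l, l ≠ k → l ≠ i → GJS (P i) (P k) α < GJS (P l) (P k) α)
    (hV : 0 < disp (P i) (P k) α) (hε : ε k ∈ Set.Ioo 0 1) :
    ∃ C, ∀ᶠ n : ℕ in atTop, ∀ τ, n * τ ≤ secondOrder (P i) (P k) α (ε k) n - C →
      zetaM (gutmanM M α τ n) P k ≤ ε k := by
  obtain ⟨C, hC⟩ := exists_infoCDF_quantile_bounds hα (hP i) (hP k) hV (stdCDFInv (ε k)) M
  set B : Fin M → ℝ := fun l => ∑ x, |iDens1 (P l) (P k) α x|
  have hfar : ∀ᶠ n : ℕ in atTop, ∀ l, l ≠ k → l ≠ i →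
      infoCDF (P l) (P k) α n (secondOrder (P i) (P k) α (ε k) n - (C + B i) + B l) ≤ 1 / √n := by
    simp only [eventually_all, sub_add]
    exact fun l hlk hli =>
      eventually_infoCDF_secondOrder_sub_le hα (hP l) (hP k) (hmin l hlk hli) (ε k) _
  refine ⟨C + B i, ?_⟩
  filter_upwards [hC, hfar, eventually_gt_atTop 0] with n hquantile hfar hn τ hτ
  rw [stdCDF_stdCDFInv hε] at hquantile
  have hcdf : ∀ l, prob (pairLaw (trainLen α n) n (P l) (P k))
      (fun ω => GJS (empDist ω.1) (empDist ω.2) α ≤ τ) ≤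
      infoCDF (P l) (P k) α n (secondOrder (P i) (P k) α (ε k) n - (C + B i) + B l) := fun l =>
    (prob_GJS_le_le_infoCDF hα (hP l) (hP k) hn τ).trans
      (monotone_infoCDF (hP l) (hP k) n (by gcongr))
  have hnear := hcdf i
  rw [sub_add, add_sub_cancel_right, secondOrder] at hnear
  have hrest := Finset.sum_le_card_nsmul ((Finset.univ.erase k).erase i) _ _ fun l hl =>
    (hcdf l).trans (hfar l (Finset.ne_of_mem_erase (Finset.mem_of_mem_erase hl))
      (Finset.ne_of_mem_erase hl))
  have hcard : (((Finset.univ.erase k).erase i).card : ℝ) ≤ M := by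
    exact_mod_cast (Finset.card_le_univ _).trans_eq (Fintype.card_fin M)
  have hrest := hrest.trans (le_of_eq_of_le (nsmul_eq_mul _ _)
    (mul_le_mul_of_nonneg_right hcard (by positivity)))
  refine (zetaM_gutmanM_le hP τ k).trans ?_
  rw [← Finset.add_sum_erase _ _ (Finset.mem_erase.2 ⟨hik, Finset.mem_univ i⟩)]
  rw [mul_one_div] at hrest
  linarith [hquantile.1]

lemma exists_forall_zetaM_gutmanM_le (hα : 0 < α) (hP : ∀ i, IsDist (P i)) {ι : Fin M → Fin M}
    (hι : ∀ k, ι k ≠ k)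
    (hmin : ∀ k l, l ≠ k → l ≠ ι k → GJS (P (ι k)) (P k) α < GJS (P l) (P k) α)
    (hV : ∀ k, 0 < disp (P (ι k)) (P k) α) (hε : ∀ k, ε k ∈ Set.Ioo 0 1) {t : ℕ → ℝ}
    (ht : ∀ k, ∀ᶠ n in atTop, t n ≤ secondOrder (P (ι k)) (P k) α (ε k) n) :
    ∃ C, ∀ᶠ n : ℕ in atTop, ∀ τ, n * τ ≤ t n - C → ∀ k, zetaM (gutmanM M α τ n) P k ≤ ε k := by
  choose C hC using fun k => exists_zetaM_gutmanM_le hα hP (hι k) (hmin k) (hV k) (hε k)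
  obtain ⟨B, hB⟩ := (Set.finite_range C).bddAbove
  refine ⟨B, ?_⟩
  filter_upwards [eventually_all.2 hC, eventually_all.2 ht] with n hC ht τ hτ k
  exact hC k τ (by linarith [ht k, hB ⟨k, rfl⟩])

lemma eventually_trainLen_mul_le_pow (hα : 0 < α) :
    ∀ᶠ n : ℕ in atTop, ((trainLen α n : ℝ) + 1) * (n + 1) ≤ (n : ℝ) ^ 4 := by
  filter_upwards [eventually_ge_atTop 2, eventually_ge_atTop ⌈α + 1⌉₊] with n h2 hαn
  have h2 : (2 : ℝ) ≤ n := Nat.ofNat_le_cast.2 h2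
  have hαn := (Nat.le_ceil _).trans (Nat.cast_le.2 hαn)
  calc ((trainLen α n : ℝ) + 1) * (n + 1) ≤ (n : ℝ) ^ 2 * (n : ℝ) ^ 2 := by
        gcongr
        · nlinarith [trainLen_le hα n]
        · nlinarith
    _ = (n : ℝ) ^ 4 := by ring

lemma eventually_betaM_gutmanM_le (hα : 0 < α) :
    ∀ᶠ n : ℕ in atTop, ∀ τ (Q : Fin M → Y → ℝ), (∀ i, IsDist (Q i)) → ∀ j,
      betaM (gutmanM M α τ n) Q j ≤ Real.exp (4 * Fintype.card Y * Real.log n - n * τ) := by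
  filter_upwards [eventually_trainLen_mul_le_pow hα, eventually_gt_atTop 0] with n hpow hn τ Q hQ j
  calc betaM (gutmanM M α τ n) Q j
      ≤ (((trainLen α n : ℝ) + 1) * (n + 1)) ^ Fintype.card Y * Real.exp (-(n * τ)) :=
        betaM_gutmanM_le hα hn hQ τ j
    _ ≤ ((n : ℝ) ^ 4) ^ Fintype.card Y * Real.exp (-(n * τ)) := by gcongr
    _ = Real.exp (4 * Fintype.card Y * Real.log n - n * τ) := by
        rw [← pow_mul, sub_eq_add_neg, Real.exp_add, mul_comm (4 * (Fintype.card Y : ℝ)),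
          Real.exp_mul, Real.exp_log (Nat.cast_pos.2 hn)]
        norm_cast

end Achievability

theorem exists_mem_achievableExponents {Y : Type*} [Fintype Y] {M : ℕ} [NeZero M] {α : ℝ}
    {P : Fin M → Y → ℝ} {ε : Fin M → ℝ} (hα : 0 < α) (hP : ∀ i, IsDist (P i)) {ι : Fin M → Fin M}
    (hι : ∀ k, ι k ≠ k)
    (hmin : ∀ k l, l ≠ k → l ≠ ι k → GJS (P (ι k)) (P k) α < GJS (P l) (P k) α)
    (hV : ∀ k, 0 < disp (P (ι k)) (P k) α) (hε : ∀ k, ε k ∈ Set.Ioo 0 1) {t : ℕ → ℝ}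
    (ht : ∀ k, ∀ᶠ n in atTop, t n ≤ secondOrder (P (ι k)) (P k) α (ε k) n) :
    ∃ C, ∀ᶠ n : ℕ in atTop, ∀ lam, 0 ≤ lam → n * lam ≤ t n - C * Real.log n →
      lam ∈ achievableExponents α n ε P := by
  classical
  obtain ⟨C, hC⟩ := exists_forall_zetaM_gutmanM_le hα hP hι hmin hV hε ht
  refine ⟨|C| + 4 * Fintype.card Y, ?_⟩
  filter_upwards [hC, eventually_betaM_gutmanM_le (Y := Y) (M := M) hα,
    eventually_one_le_log_natCast,
    eventually_gt_atTop 0] with n hζ hβ hlog hn lam hlam hle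
  have hn0 : (n : ℝ) ≠ 0 := Nat.cast_ne_zero.2 hn.ne'
  set τ := lam + 4 * Fintype.card Y * Real.log n / n
  have hτ : n * τ = n * lam + 4 * Fintype.card Y * Real.log n := by
    rw [mul_add, mul_div_cancel₀ _ hn0]
  refine ⟨hlam, gutmanM M α τ n, fun Q hQ j => (hβ τ Q hQ j).trans_eq ?_, hζ τ ?_⟩
  · rw [hτ, sub_add_cancel_right]
  · linarith [le_abs_self C, le_mul_of_one_le_right (abs_nonneg C) hlog]

lemma abs_mul_sSup_sub_le {S : Set ℝ} {n t a b : ℝ} (hn : 0 < n) (h0 : 0 ∈ S)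
    (hupper : ∀ lam ∈ S, n * lam ≤ t + a)
    (hlower : ∀ lam, 0 ≤ lam → n * lam ≤ t - b → lam ∈ S) :
    |n * sSup S - t| ≤ max a b := by
  have hle : ∀ lam ∈ S, lam ≤ (t + a) / n := fun lam hlam =>
    (le_div_iff₀' hn).2 (hupper lam hlam)
  have hsup : n * sSup S ≤ t + a := (le_div_iff₀' hn).1 (csSup_le ⟨0, h0⟩ hle)
  have hinf : t - b ≤ n * sSup S := by
    rw [← div_le_iff₀' hn]
    obtain hneg | hpos := le_total ((t - b) / n) 0
    · exact hneg.trans (le_csSup ⟨_, hle⟩ h0)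
    · exact le_csSup ⟨_, hle⟩ (hlower _ hpos (mul_div_cancel₀ _ hn.ne').le)
  rw [abs_le]
  constructor <;> linarith [le_max_left a b, le_max_right a b]

/-- Theorem 3 of the paper: second-order asymptotics of M-ary
classification with rejection. Here `ι j = i*(j)` is the unique minimizer of
`i ↦ GJS(P_i, P_j, α)` over `i ≠ j`; `hJ1` states `j ∈ J₁(P,α)` and `hJ2` states
`j ∈ J₂(P,α)`. -/
theorem lamStarM_second_order {X : Type*} [Fintype X] [DecidableEq X]
    (M : ℕ) (α : ℝ) (hα : 0 < α)
    (ε : Fin M → ℝ) (hε : ∀ j, ε j ∈ Set.Ioo (0 : ℝ) 1)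
    (P : Fin M → X → ℝ) (hP : ∀ i, IsDist (P i))
    (hdist : ∀ i k : Fin M, i ≠ k → P i ≠ P k)
    (ι : Fin M → Fin M) (hι : ∀ j, ι j ≠ j)
    (hmin : ∀ j k : Fin M, k ≠ j → k ≠ ι j →
      GJS (P (ι j)) (P j) α < GJS (P k) (P j) α)
    (hV : ∀ j, 0 < disp (P (ι j)) (P j) α)
    (j : Fin M)
    (hJ1 : ∀ k : Fin M, GJS (P (ι j)) (P j) α ≤ GJS (P (ι k)) (P k) α)
    (hJ2 : ∀ k : Fin M, GJS (P (ι k)) (P k) α = GJS (P (ι j)) (P j) α →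
      Real.sqrt (disp (P (ι j)) (P j) α) * stdCDFInv (ε j) ≤
        Real.sqrt (disp (P (ι k)) (P k) α) * stdCDFInv (ε k)) :
    ∃ C > (0 : ℝ), ∃ n0 : ℕ, ∀ n ≥ n0,
      |lamStarM M α n ε P - GJS (P (ι j)) (P j) α -
        Real.sqrt (disp (P (ι j)) (P j) α / n) * stdCDFInv (ε j)| ≤
          C * Real.log n / n := by
  have : NeZero M := ⟨j.pos.ne'⟩
  obtain ⟨C1, hupper⟩ :=
    exists_mul_le_secondOrder_add hα hP (hdist _ _ (hι j)) (hV j) (hε j)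
  obtain ⟨C2, hlower⟩ := exists_mem_achievableExponents hα hP hι hmin hV hε fun k =>
    eventually_secondOrder_le (hJ1 k) (hJ2 k)
  refine ⟨max |C1| |C2| + 1, by positivity, eventually_atTop.1 ?_⟩
  filter_upwards [hupper, hlower, eventually_one_le_log_natCast, eventually_ne_atTop 0]
    with n hupper hlower hlog hn
  have hn0 : (0 : ℝ) < n := Nat.cast_pos.2 hn.pos
  have hbound : |n * lamStarM M α n ε P - secondOrder (P (ι j)) (P j) α (ε j) n| ≤
      max (C1 * Real.log n) (C2 * Real.log n) :=
    abs_mul_sSup_sub_le hn0 (zero_mem_achievableExponents (fun k => (hε k).1.le) j n)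
      hupper hlower
  rw [sub_sub, ← secondOrder_div_natCast _ _ (hV j).le _ hn, ← mul_div_cancel_left₀
    (lamStarM M α n ε P) hn0.ne', ← sub_div, abs_div, abs_of_pos hn0]
  gcongr
  refine hbound.trans (max_le ?_ ?_) <;> gcongr
  · linarith [le_abs_self C1, le_max_left |C1| |C2|]
  · linarith [le_abs_self C2, le_max_right |C1| |C2|]

end Classification
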